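/- arXiv:1801.10436 — 2 statements merged into one kernel-verified Lean document; each statement's English description precedes it below -/
import Mathlib

section
/- For n ≥ 3, let m be the unique integer for which fib(m−1) < n−2 ≤ fib(m). If w is a shortest carefully synchronizing word for the PFA P_n, then |w| = n² + mn − 5n − fib(m+1) − 2m + 8. Furthermore, |w| > (n−1)² for all n ≥ 6. -/
/-- One step of a PFA on an `Option` state. -/
def pfaStep {Q σ : Type*} (δ : Q → σ → Option Q) (o : Option Q) (a : σ) : Option Q :=
  o.bind fun q => δ q a

/-- The (partial) state reached from `q` after reading word `w` in the PFA `δ`. -/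
def pfaRun {Q σ : Type*} (δ : Q → σ → Option Q) (q : Q) (w : List σ) : Option Q :=
  w.foldl (pfaStep δ) (some q)

/-- A word `w` is carefully synchronizing for the PFA `δ`. -/
def IsCareSyncWord {Q σ : Type*} (δ : Q → σ → Option Q) (w : List σ) : Prop :=
  ∃ qs : Q, ∀ q : Q, pfaRun δ q w = some qs

/-- The PFA `P_n`: states `Fin n` (state `i` represents the paper's state `i+1`),
alphabet `Bool` with `false = a`, `true = b`.  Here `1a` is undefined, `qa = q+1` for
`2 ≤ q ≤ n−1`, `na = 1`; `qb = q+1` for `q = 1,2` and `qb = q` for `3 ≤ q ≤ n`. -/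
def Pdelta (n : ℕ) (hn : 3 ≤ n) : Fin n → Bool → Option (Fin n) := fun q x =>
  match x with
  | false =>
    if q.val = 0 then none
    else if hq : q.val + 1 < n then some ⟨q.val + 1, hq⟩
    else some ⟨0, by omega⟩
  | true =>
    if hq : q.val ≤ 1 then some ⟨q.val + 1, by omega⟩ else some q

/-! ### Unwrapped trajectories

A word is written as `b ^ e 0 · a · b ^ e 1 · a ⋯ a · b ^ e T`. On sets avoiding the undefined
transition, `a` rotates a cycle of length `N = n - 1`, and the second `b` of a block pushes the
state at the distinguished cell one step further. -/

/-- The word `b ^ e 0 · a · b ^ e 1 · a ⋯ a · b ^ e T`. -/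
def blockWord (e : ℕ → ℕ) : ℕ → List Bool
  | 0 => List.replicate (e 0) true
  | T + 1 => blockWord e T ++ false :: List.replicate (e (T + 1)) true

/-- The unwrapped position, just before the block `b ^ e t`, of the token starting at `q`. It is
at the distinguished cell when it is a multiple of `N`. -/
def track (N : ℕ) (e : ℕ → ℕ) (q : ℕ) : ℕ → ℕ
  | 0 => q
  | t + 1 => track N e q t + 1 + if N ∣ track N e q t ∧ 2 ≤ e t then 1 else 0

/-- The state of `P_n` (counted from `0`) of a token at unwrapped position `y` after `e` letters
`b` of the current block. -/
def stateVal (N y e : ℕ) : ℕ := if N ∣ y then min e 2 else y % N + 1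

theorem exists_eq_blockWord (w : List Bool) : ∃ e T, w = blockWord e T := by
  induction w using List.reverseRecOn with
  | nil => exact ⟨fun _ => 0, 0, rfl⟩
  | append_singleton w x ih =>
    obtain ⟨e, T, rfl⟩ := ih
    have congr_block : ∀ (f : ℕ → ℕ) (S : ℕ), (∀ t ≤ S, f t = e t) →
        blockWord f S = blockWord e S := by
      intro f S
      induction S with
      | zero => intro h; simp [blockWord, h 0 le_rfl]
      | succ S ih =>
        intro h
        simp [blockWord, ih fun t ht => h t (by omega), h (S + 1) le_rfl]
    cases x with
    | false =>
      refine ⟨fun t => if t ≤ T then e t else 0, T + 1, ?_⟩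
      rw [blockWord, congr_block (fun t => if t ≤ T then e t else 0) T fun t ht => if_pos ht]
      simp
    | true =>
      refine ⟨fun t => if t = T then e T + 1 else e t, T, ?_⟩
      cases T with
      | zero => simp [blockWord, List.replicate_succ']
      | succ T =>
        rw [blockWord, blockWord, congr_block (fun t => if t = T + 1 then e (T + 1) + 1 else e t) T
          fun t ht => if_neg (by omega)]
        simp [List.replicate_succ']

theorem length_blockWord (e : ℕ → ℕ) (T : ℕ) :
    (blockWord e T).length = T + ∑ t ∈ Finset.range (T + 1), e t := by
  induction T with
  | zero => simp [blockWord]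
  | succ T ih =>
    rw [Finset.sum_range_succ, blockWord, List.length_append, ih]
    simp
    omega

theorem pfaRun_append {Q σ : Type*} (δ : Q → σ → Option Q) (q : Q) (u v : List σ) :
    pfaRun δ q (u ++ v) = (pfaRun δ q u).bind fun s => pfaRun δ s v := by
  have none_run : ∀ v : List σ, v.foldl (pfaStep δ) none = none := by
    intro v
    induction v with
    | nil => rfl
    | cons x v ih => simpa [pfaStep] using ih
  unfold pfaRun
  rw [List.foldl_append]
  cases h : List.foldl (pfaStep δ) (some q) u with
  | none => simp [none_run]
  | some s => simp

theorem pfaRun_replicate_true (n : ℕ) (hn : 3 ≤ n) (s : Fin n) (k : ℕ) :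
    ∃ s' : Fin n, pfaRun (Pdelta n hn) s (List.replicate k true) = some s' ∧
      s'.val = if 2 ≤ s.val then s.val else min (s.val + k) 2 := by
  induction k with
  | zero => exact ⟨s, rfl, by split_ifs <;> omega⟩
  | succ k ih =>
    obtain ⟨s', hs', hv⟩ := ih
    rw [List.replicate_succ', pfaRun_append, hs']
    by_cases h : s'.val ≤ 1
    · refine ⟨⟨s'.val + 1, by omega⟩, by simp [pfaRun, pfaStep, Pdelta, h], ?_⟩
      simp only
      split_ifs at hv ⊢ <;> omega
    · refine ⟨s', by simp [pfaRun, pfaStep, Pdelta, h], ?_⟩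
      split_ifs at hv ⊢ <;> omega

theorem pfaRun_block (n : ℕ) (hn : 3 ≤ n) (s : Fin n) (y k : ℕ)
    (hs : s.val = stateVal (n - 1) y 0) :
    ∃ s' : Fin n, pfaRun (Pdelta n hn) s (List.replicate k true) = some s' ∧
      s'.val = stateVal (n - 1) y k := by
  obtain ⟨s', h, hv⟩ := pfaRun_replicate_true n hn s k
  refine ⟨s', h, ?_⟩
  unfold stateVal at *
  by_cases hd : (n - 1) ∣ y
  · simp only [hd, if_true] at hs ⊢
    split_ifs at hv <;> omega
  · have := Nat.pos_of_ne_zero fun h0 => hd (Nat.dvd_of_mod_eq_zero h0)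
    simp only [hd, if_false] at hs ⊢
    split_ifs at hv <;> omega

theorem Pdelta_false (n : ℕ) (hn : 3 ≤ n) (s : Fin n) (y k : ℕ)
    (hs : s.val = stateVal (n - 1) y k) (hk : (n - 1) ∣ y → 1 ≤ k) :
    ∃ s' : Fin n, Pdelta n hn s false = some s' ∧
      s'.val = stateVal (n - 1) (y + 1 + if (n - 1) ∣ y ∧ 2 ≤ k then 1 else 0) 0 := by
  obtain ⟨N, rfl⟩ : ∃ N, n = N + 1 := ⟨n - 1, by omega⟩
  simp only [Nat.add_sub_cancel] at *
  have hpos : s.val ≠ 0 := by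
    rw [hs, stateVal]; split_ifs with h
    · have := hk h; omega
    · omega
  have hstep : ∃ s' : Fin (N + 1), Pdelta (N + 1) hn s false = some s' ∧
      s'.val = if s.val + 1 < N + 1 then s.val + 1 else 0 := by
    by_cases h : s.val + 1 < N + 1
    · refine ⟨⟨s.val + 1, h⟩, ?_, by rw [if_pos h]⟩
      simp only [Pdelta]
      rw [if_neg hpos, dif_pos h]
    · refine ⟨⟨0, by omega⟩, ?_, by rw [if_neg h]⟩
      simp only [Pdelta]
      rw [if_neg hpos, dif_neg h]
  obtain ⟨s', h1, h2⟩ := hstep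
  refine ⟨s', h1, ?_⟩
  rw [h2, hs]
  by_cases hd : N ∣ y
  · obtain ⟨c, rfl⟩ := hd
    have hk1 := hk ⟨c, rfl⟩
    have e1 : ¬ N ∣ N * c + 1 := by
      rw [Nat.dvd_add_right ⟨c, rfl⟩]; exact fun h => by have := Nat.le_of_dvd one_pos h; omega
    have m1 : (N * c + 1) % N = 1 := by
      rw [Nat.mul_add_mod]; exact Nat.mod_eq_of_lt (by omega)
    by_cases h2k : 2 ≤ k
    · have e2 : N ∣ N * c + 1 + 1 ↔ N = 2 := by
        rw [add_assoc, Nat.dvd_add_right ⟨c, rfl⟩]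
        exact ⟨fun h => by have := Nat.le_of_dvd two_pos h; omega, fun h => by simp [h]⟩
      by_cases hN : N = 2
      · simp [stateVal, h2k, hN]
      · have := mt e2.1 hN
        have m2 : (N * c + 1 + 1) % N = 2 := by
          rw [add_assoc, Nat.mul_add_mod]; exact Nat.mod_eq_of_lt (by omega)
        simp [stateVal, h2k, this, m2]
        omega
    · have : k = 1 := by omega
      subst this
      simp [stateVal, e1, m1]
      omega
  · have hm := Nat.pos_of_ne_zero fun h0 => hd (Nat.dvd_of_mod_eq_zero h0)
    have hlt : y % N < N := Nat.mod_lt _ (by omega)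
    obtain ⟨b, c, rfl, hc⟩ : ∃ b c, y = N * b + c ∧ y % N = c :=
      ⟨y / N, y % N, (Nat.div_add_mod y N).symm, rfl⟩
    rw [hc] at hm hlt
    simp only [stateVal, hd, if_false, false_and, add_zero, hc]
    by_cases hc : c + 1 = N
    · have : N ∣ N * b + c + 1 := ⟨b + 1, by rw [Nat.mul_succ]; omega⟩
      simp [this, hc]
    · have e1 : ¬ N ∣ N * b + c + 1 := by
        rw [add_assoc, Nat.dvd_add_right ⟨b, rfl⟩]
        exact fun h => by have := Nat.le_of_dvd (by omega) h; omega
      have m1 : (N * b + c + 1) % N = c + 1 := by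
        rw [add_assoc, Nat.mul_add_mod]; exact Nat.mod_eq_of_lt (by omega)
      simp [e1, m1]
      omega

theorem pfaRun_blockWord (n : ℕ) (hn : 3 ≤ n) (e : ℕ → ℕ) (q : Fin n) (y : ℕ)
    (hq : q.val = stateVal (n - 1) y 0) (T : ℕ)
    (hvalid : ∀ t < T, (n - 1) ∣ track (n - 1) e y t → 1 ≤ e t) :
    ∃ s : Fin n, pfaRun (Pdelta n hn) q (blockWord e T) = some s ∧
      s.val = stateVal (n - 1) (track (n - 1) e y T) (e T) := by
  induction T with
  | zero => exact pfaRun_block n hn q y (e 0) hq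
  | succ T ih =>
    obtain ⟨s, hs, hv⟩ := ih fun t ht => hvalid t (by omega)
    obtain ⟨s', hs', hv'⟩ := Pdelta_false n hn s _ _ hv (hvalid T (by omega))
    obtain ⟨s'', hs'', hv''⟩ := pfaRun_block n hn s' _ (e (T + 1)) hv'
    refine ⟨s'', ?_, hv''⟩
    rw [blockWord, pfaRun_append, hs]
    simpa [pfaRun, pfaStep, hs'] using hs''

theorem valid_of_pfaRun_blockWord (n : ℕ) (hn : 3 ≤ n) (e : ℕ → ℕ) (q : Fin n) (y : ℕ)
    (hq : q.val = stateVal (n - 1) y 0) (T : ℕ) (s : Fin n)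
    (hs : pfaRun (Pdelta n hn) q (blockWord e T) = some s) :
    ∀ t < T, (n - 1) ∣ track (n - 1) e y t → 1 ≤ e t := by
  induction T generalizing s with
  | zero => omega
  | succ T ih =>
    rw [blockWord, pfaRun_append] at hs
    obtain ⟨s₁, hs₁, hrest⟩ := Option.bind_eq_some_iff.1 hs
    have hv := ih s₁ hs₁
    intro t ht hd
    rcases Nat.lt_succ_iff_lt_or_eq.1 ht with h | rfl
    · exact hv t h hd
    · by_contra h0
      obtain ⟨s₂, hs₂, hval⟩ := pfaRun_blockWord n hn e q y hq t hv
      obtain rfl : s₁ = s₂ := by rw [hs₁] at hs₂; exact Option.some.inj hs₂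
      have hz : s₁.val = 0 := by rw [hval, stateVal, if_pos hd]; omega
      have hnone : ∀ v : List Bool, v.foldl (pfaStep (Pdelta n hn)) none = none := by
        intro v
        induction v with
        | nil => rfl
        | cons x v ih => simpa [pfaStep] using ih
      simp [pfaRun, pfaStep, Pdelta, hz, hnone] at hrest

/-! ### Lower bound -/

section LowerBound

variable {N : ℕ} {e : ℕ → ℕ}

theorem track_add_period (q t : ℕ) : track N e (q + N) t = track N e q t + N := by
  induction t with
  | zero => rfl
  | succ t ih => simp only [track, ih, Nat.dvd_add_self_right]; omega

theorem track_mono {q q' : ℕ} (h : q ≤ q') (t : ℕ) : track N e q t ≤ track N e q' t := by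
  induction t with
  | zero => exact h
  | succ t ih =>
    rcases ih.eq_or_lt with h | h
    · simp [track, h]
    · simp only [track]; split_ifs <;> omega

theorem track_eq_of_le {q q' t t' : ℕ} (h : track N e q t = track N e q' t) (ht : t ≤ t') :
    track N e q t' = track N e q' t' := by
  induction t', ht using Nat.le_induction with
  | base => exact h
  | succ t' _ ih => simp [track, ih]

/-- The times before `T` at which token `q` is at the distinguished cell. -/
def visitTimes (N : ℕ) (e : ℕ → ℕ) (T q : ℕ) : Finset ℕ :=
  (Finset.range T).filter fun t => N ∣ track N e q t

/-- The number of letters `b` that a visit at time `t` accounts for. -/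
def visitCost (e : ℕ → ℕ) (t : ℕ) : ℕ := 1 + if 2 ≤ e t then 1 else 0

/-- The number of times token `q` is pushed before time `T`. -/
def pushCount (N : ℕ) (e : ℕ → ℕ) (T q : ℕ) : ℕ :=
  ∑ t ∈ visitTimes N e T q, if 2 ≤ e t then 1 else 0

theorem visitTimes_succ (T q : ℕ) : visitTimes N e (T + 1) q =
    if N ∣ track N e q T then insert T (visitTimes N e T q) else visitTimes N e T q := by
  simp [visitTimes, Finset.range_add_one, Finset.filter_insert]

theorem notMem_visitTimes (T q : ℕ) : T ∉ visitTimes N e T q := by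
  simp [visitTimes]

theorem track_eq (q T : ℕ) : track N e q T = q + T + pushCount N e T q := by
  induction T with
  | zero => simp [track, pushCount, visitTimes]
  | succ T ih =>
    simp only [track, pushCount, visitTimes_succ] at *
    by_cases hd : N ∣ track N e q T
    · simp only [hd, true_and, if_true, Finset.sum_insert (notMem_visitTimes T q)]
      omega
    · simp only [hd, false_and, if_false]
      omega

theorem pushCount_le_card (q T : ℕ) : pushCount N e T q ≤ (visitTimes N e T q).card := by
  unfold pushCount
  rw [Finset.card_eq_sum_ones]
  exact Finset.sum_le_sum fun t _ => by split_ifs <;> omega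

/-- Ceiling division by `N`. -/
def ceilDivN (N x : ℕ) : ℕ := (x + N - 1) / N

theorem ceilDivN_eq_iff (hN : 2 ≤ N) (x c : ℕ) :
    ceilDivN N x = c ↔ x ≤ N * c ∧ N * c < x + N := by
  unfold ceilDivN
  rw [Nat.div_eq_iff (by omega), mul_comm c N]
  omega

/-- A trajectory never skips a multiple of `N`, so visits are counted by ceilings. -/
theorem card_visitTimes (hN : 2 ≤ N) (q T : ℕ) :
    (visitTimes N e T q).card + ceilDivN N q = ceilDivN N (track N e q T) := by
  induction T with
  | zero => simp [track, visitTimes]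
  | succ T ih =>
    symm
    have key := (ceilDivN_eq_iff hN _ _).1 ih.symm
    rw [ceilDivN_eq_iff hN, visitTimes_succ, track]
    by_cases hd : N ∣ track N e q T
    · simp only [hd, true_and, if_true, Finset.card_insert_of_notMem (notMem_visitTimes T q)]
      obtain ⟨c, hc⟩ := hd
      rw [hc] at key ⊢
      have hc' : (visitTimes N e T q).card + ceilDivN N q = c := by
        have h1 : c ≤ (visitTimes N e T q).card + ceilDivN N q :=
          Nat.le_of_mul_le_mul_left key.1 (by omega)
        have h2 : (visitTimes N e T q).card + ceilDivN N q < c + 1 :=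
          Nat.lt_of_mul_lt_mul_left (a := N) (by rw [Nat.mul_succ]; exact key.2)
        omega
      rw [show (visitTimes N e T q).card + 1 + ceilDivN N q = c + 1 by omega, Nat.mul_succ]
      split_ifs <;> omega
    · simp only [hd, false_and, if_false]
      refine ⟨?_, by omega⟩
      rcases key.1.eq_or_lt with h | h
      · exact absurd ⟨_, h⟩ hd
      · omega

theorem pushCount_mul_le (hN : 2 ≤ N) (q T : ℕ) (hp : 1 ≤ pushCount N e T q) :
    (N - 1) * (pushCount N e T q - 1) + 1 ≤ T := by
  induction T with
  | zero => simp [pushCount, visitTimes] at hp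
  | succ T ih =>
    have hsame : pushCount N e (T + 1) q = pushCount N e T q ∨
        (N ∣ track N e q T ∧ pushCount N e (T + 1) q = pushCount N e T q + 1) := by
      unfold pushCount
      rw [visitTimes_succ]
      by_cases hd : N ∣ track N e q T
      · simp only [hd, if_true, Finset.sum_insert (notMem_visitTimes T q), true_and]
        split_ifs <;> omega
      · simp [hd]
    rcases hsame with h | ⟨hd, h⟩
    · rw [h] at hp ⊢
      have := ih hp
      omega
    · rw [h, Nat.add_sub_cancel]
      have h1 := card_visitTimes (e := e) hN q T
      have h2 := (ceilDivN_eq_iff hN _ _).1 h1.symm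
      have h3 := (ceilDivN_eq_iff hN q _).1 rfl
      have h4 := pushCount_le_card (N := N) (e := e) q T
      have h5 := track_eq (N := N) (e := e) q T
      obtain ⟨c, hc⟩ := hd
      rw [hc] at h2
      have h6 : (visitTimes N e T q).card + ceilDivN N q ≤ c := by
        have : (visitTimes N e T q).card + ceilDivN N q < c + 1 :=
          Nat.lt_of_mul_lt_mul_left (a := N) (by rw [Nat.mul_succ]; exact h2.2)
        omega
      have h7 : N * (pushCount N e T q + ceilDivN N q) ≤ N * c :=
        Nat.mul_le_mul_left N (by omega)
      rw [Nat.mul_add] at h7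
      have h8 : N * pushCount N e T q = (N - 1) * pushCount N e T q + pushCount N e T q := by
        obtain ⟨M, rfl⟩ : ∃ M, N = M + 1 := ⟨N - 1, by omega⟩
        simp [Nat.succ_mul]
      omega

variable {T : ℕ}

/-- Tokens of a window that eventually merges are at the distinguished cell simultaneously only
after they have merged. -/
theorem track_eq_of_dvd {i j t : ℕ} (hij : i ≤ j) (hjN : j < i + N)
    (hT : track N e i T = track N e j T) (ht : t ≤ T)
    (hi : N ∣ track N e i t) (hj : N ∣ track N e j t) : track N e i t = track N e j t := by
  have h1 : track N e i t ≤ track N e j t := track_mono hij t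
  have h2 : track N e j t ≤ track N e i t + N := by
    rw [← track_add_period]; exact track_mono hjN.le t
  by_contra hne
  have h3 : N ≤ track N e j t - track N e i t :=
    Nat.le_of_dvd (by omega) (Nat.dvd_sub hj hi)
  have h4 : track N e j t = track N e (i + N) t := by rw [track_add_period]; omega
  have h5 := track_eq_of_le h4 ht
  rw [track_add_period] at h5
  omega

theorem exists_merge_time {i j : ℕ} (hT : track N e i T = track N e j T) :
    ∃ σ ≤ T, track N e i σ = track N e j σ ∧ ∀ t < σ, track N e i t ≠ track N e j t := by
  classical
  have hex : ∃ t, track N e i t = track N e j t := ⟨T, hT⟩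
  exact ⟨Nat.find hex, Nat.find_min' hex hT, Nat.find_spec hex, fun t ht => Nat.find_min hex ht⟩

theorem sum_visitCost (σ q : ℕ) : ∑ t ∈ visitTimes N e σ q, visitCost e t =
    (visitTimes N e σ q).card + pushCount N e σ q := by
  simp only [visitCost, Finset.sum_add_distrib, pushCount, Finset.card_eq_sum_ones]

theorem front_cost (hN : 2 ≤ N) {i j : ℕ} (hij : i ≤ j) (hjN : j < i + N)
    (hT : track N e i T = track N e j T) :
    j + ceilDivN N i ≤
      i + ceilDivN N j + ∑ t ∈ visitTimes N e T j \ visitTimes N e T i, visitCost e t := by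
  obtain ⟨σ, hσT, hσ, hlt⟩ := exists_merge_time hT
  have hsub : visitTimes N e σ j ⊆ visitTimes N e T j \ visitTimes N e T i := by
    intro t ht
    simp only [visitTimes, Finset.mem_filter, Finset.mem_range, Finset.mem_sdiff] at ht ⊢
    exact ⟨⟨by omega, ht.2⟩, fun h => hlt t ht.1
      (track_eq_of_dvd hij hjN hT (by omega) h.2 ht.2)⟩
  have h1 := Finset.sum_le_sum_of_subset (f := visitCost e) hsub
  rw [sum_visitCost] at h1
  have h2 := card_visitTimes (e := e) hN i σ
  have h3 := card_visitTimes (e := e) hN j σ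
  have h4 := track_eq (N := N) (e := e) i σ
  have h5 := track_eq (N := N) (e := e) j σ
  have h6 := pushCount_le_card (N := N) (e := e) i σ
  rw [hσ] at h2
  omega

theorem rear_cost {i j : ℕ} (hij : i ≤ j) (hjN : j < i + N)
    (hT : track N e i T = track N e j T) :
    2 * j ≤ 2 * i + ∑ t ∈ visitTimes N e T i \ visitTimes N e T j, visitCost e t := by
  obtain ⟨σ, hσT, hσ, hlt⟩ := exists_merge_time hT
  have hsub : visitTimes N e σ i ⊆ visitTimes N e T i \ visitTimes N e T j := by
    intro t ht
    simp only [visitTimes, Finset.mem_filter, Finset.mem_range, Finset.mem_sdiff] at ht ⊢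
    exact ⟨⟨by omega, ht.2⟩, fun h => hlt t ht.1
      (track_eq_of_dvd hij hjN hT (by omega) ht.2 h.2)⟩
  have h1 := Finset.sum_le_sum_of_subset (f := visitCost e) hsub
  rw [sum_visitCost] at h1
  have h4 := track_eq (N := N) (e := e) i σ
  have h5 := track_eq (N := N) (e := e) j σ
  have h6 := pushCount_le_card (N := N) (e := e) i σ
  omega

/-- The visit times of the tokens of the window `[i, j]` that are not visits of its end tokens. -/
def innerTimes (N : ℕ) (e : ℕ → ℕ) (T i j : ℕ) : Finset ℕ :=
  (Finset.Icc i j).biUnion (visitTimes N e T) \ (visitTimes N e T i ∪ visitTimes N e T j)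

theorem mem_innerTimes {i j t : ℕ} : t ∈ innerTimes N e T i j ↔
    (∃ q, i ≤ q ∧ q ≤ j ∧ t ∈ visitTimes N e T q) ∧
      t ∉ visitTimes N e T i ∧ t ∉ visitTimes N e T j := by
  simp [innerTimes, and_assoc]

theorem mem_visitTimes {q t : ℕ} :
    t ∈ visitTimes N e T q ↔ t < T ∧ N ∣ track N e q t := by
  simp [visitTimes]

/-- The last pair of neighbours to merge splits the cost of a window. -/
theorem exists_split {i j : ℕ} (hij : i < j) (hjN : j < i + N)
    (hT : track N e i T = track N e j T) :
    ∃ g, i ≤ g ∧ g < j ∧ track N e i T = track N e g T ∧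
      track N e (g + 1) T = track N e j T ∧
      ∑ t ∈ innerTimes N e T i g, visitCost e t +
        ∑ t ∈ visitTimes N e T g \ visitTimes N e T i, visitCost e t +
        (∑ t ∈ innerTimes N e T (g + 1) j, visitCost e t +
        ∑ t ∈ visitTimes N e T (g + 1) \ visitTimes N e T j, visitCost e t) ≤
      ∑ t ∈ innerTimes N e T i j, visitCost e t := by
  obtain ⟨σ, hσT, hσ, hlt⟩ := exists_merge_time hT
  have hσ0 : σ ≠ 0 := by rintro rfl; simp [track] at hσ; omega
  obtain ⟨g, hig, hgj, hg⟩ : ∃ g, i ≤ g ∧ g < j ∧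
      track N e g (σ - 1) < track N e (g + 1) (σ - 1) := by
    by_contra! hcon
    have : ∀ k, i ≤ k → k ≤ j → track N e k (σ - 1) ≤ track N e i (σ - 1) := by
      intro k hk
      induction k, hk using Nat.le_induction with
      | base => simp
      | succ k hk ih => exact fun h => (hcon k hk (by omega)).trans (ih (by omega))
    exact hlt (σ - 1) (by omega) (le_antisymm (track_mono hij.le _) (this j hij.le le_rfl))
  have hsep : ∀ t < σ, track N e g t ≠ track N e (g + 1) t := fun t ht h =>
    hg.ne (track_eq_of_le h (by omega))
  have hiT : ∀ q, i ≤ q → q ≤ j → track N e i T = track N e q T := fun q h1 h2 =>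
    le_antisymm (track_mono h1 T) (by rw [hT]; exact track_mono h2 T)
  have hafter : ∀ q, i ≤ q → q ≤ j → ∀ t, σ ≤ t → track N e i t = track N e q t := by
    intro q h1 h2 t ht
    refine le_antisymm (track_mono h1 t) ?_
    rw [track_eq_of_le hσ ht]
    exact track_mono h2 t
  have hcross : ∀ q q', i ≤ q → q ≤ g → g < q' → q' ≤ j → ∀ t < σ,
      t ∈ visitTimes N e T q → t ∈ visitTimes N e T q' → False := by
    intro q q' h1 h2 h3 h4 t ht hq hq'
    rw [mem_visitTimes] at hq hq'
    have heq : track N e q t = track N e q' t :=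
      track_eq_of_dvd (by omega) (by omega)
        ((hiT q h1 (by omega)).symm.trans (hiT q' (by omega) h4)) (by omega) hq.2 hq'.2
    exact hsep t ht (le_antisymm (track_mono (by omega) t)
      ((track_mono (show g + 1 ≤ q' by omega) t).trans (heq ▸ track_mono h2 t)))
  have hbefore : ∀ q q', i ≤ q → q ≤ j → i ≤ q' → q' ≤ j → ∀ t,
      t ∈ visitTimes N e T q → t ∉ visitTimes N e T q' → t < σ := by
    intro q q' h1 h2 h3 h4 t hq hq'
    by_contra! ht
    rw [mem_visitTimes] at hq hq'
    exact hq' ⟨hq.1, by rw [← hafter q' h3 h4 t ht, hafter q h1 h2 t ht]; exact hq.2⟩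
  refine ⟨g, hig, hgj, hiT g hig hgj.le,
    (hiT (g + 1) (by omega) (by omega)).symm.trans hT, ?_⟩
  have hleft : ∀ t ∈ innerTimes N e T i g ∪ (visitTimes N e T g \ visitTimes N e T i),
      (∃ q, i ≤ q ∧ q ≤ g ∧ t ∈ visitTimes N e T q) ∧ t ∉ visitTimes N e T i ∧ t < σ := by
    intro t ht
    rw [Finset.mem_union, mem_innerTimes, Finset.mem_sdiff] at ht
    rcases ht with ⟨⟨q, h1, h2, h3⟩, h4, _⟩ | ⟨h1, h2⟩
    · exact ⟨⟨q, h1, h2, h3⟩, h4,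
        hbefore q i h1 (by omega) le_rfl hij.le t h3 h4⟩
    · exact ⟨⟨g, hig, le_rfl, h1⟩, h2, hbefore g i hig hgj.le le_rfl hij.le t h1 h2⟩
  have hright : ∀ t ∈ innerTimes N e T (g + 1) j ∪
      (visitTimes N e T (g + 1) \ visitTimes N e T j),
      (∃ q, g < q ∧ q ≤ j ∧ t ∈ visitTimes N e T q) ∧ t ∉ visitTimes N e T j ∧ t < σ := by
    intro t ht
    rw [Finset.mem_union, mem_innerTimes, Finset.mem_sdiff] at ht
    rcases ht with ⟨⟨q, h1, h2, h3⟩, _, h4⟩ | ⟨h1, h2⟩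
    · exact ⟨⟨q, h1, h2, h3⟩, h4,
        hbefore q j (by omega) (by omega) hij.le le_rfl t h3 h4⟩
    · exact ⟨⟨g + 1, by omega, hgj, h1⟩, h2,
        hbefore (g + 1) j (by omega) (by omega) hij.le le_rfl t h1 h2⟩
  rw [← Finset.sum_union, ← Finset.sum_union, ← Finset.sum_union]
  · refine Finset.sum_le_sum_of_subset fun t ht => ?_
    rw [mem_innerTimes]
    rcases Finset.mem_union.1 ht with h | h
    · obtain ⟨⟨q, h1, h2, h3⟩, h4, h5⟩ := hleft t h
      exact ⟨⟨q, h1, by omega, h3⟩, h4, fun h6 => hcross q j h1 h2 hgj le_rfl t h5 h3 h6⟩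
    · obtain ⟨⟨q, h1, h2, h3⟩, h4, h5⟩ := hright t h
      exact ⟨⟨q, by omega, h2, h3⟩, fun h6 => hcross i q le_rfl hig h1 h2 t h5 h6 h3, h4⟩
  · rw [Finset.disjoint_left]
    intro t h h'
    obtain ⟨⟨q, h1, h2, h3⟩, _, h5⟩ := hleft t h
    obtain ⟨⟨q', h1', h2', h3'⟩, _, _⟩ := hright t h'
    exact hcross q q' h1 h2 h1' h2' t h5 h3 h3'
  · rw [Finset.disjoint_left]
    intro t h h'
    exact (mem_innerTimes.1 h).2.1 (Finset.mem_sdiff.1 h').1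
  · rw [Finset.disjoint_left]
    intro t h h'
    exact (mem_innerTimes.1 h).2.2 (Finset.mem_sdiff.1 h').1

theorem add_three_le_fib (d : ℕ) : d + 3 ≤ Nat.fib (d + 4) := by
  induction d with
  | zero => decide
  | succ d ih =>
    have h1 : Nat.fib (d + 5) = Nat.fib (d + 3) + Nat.fib (d + 4) := Nat.fib_add_two
    have h2 : 0 < Nat.fib (d + 3) := Nat.fib_pos.2 (by omega)
    rw [show d + 1 + 4 = d + 5 by ring]
    omega

theorem ceilDivN_mono {x y : ℕ} (h : x ≤ y) : ceilDivN N x ≤ ceilDivN N y :=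
  Nat.div_le_div_right (by omega)

theorem inner_cost (hN : 2 ≤ N) (d : ℕ) : ∀ i j : ℕ, i ≤ j → j < i + N →
    track N e i T = track N e j T →
    (d : ℤ) * (j - i) ≤ (∑ t ∈ innerTimes N e T i j, visitCost e t : ℕ) +
      (Nat.fib (d + 4) - d - 3) + d * (ceilDivN N j - ceilDivN N i) := by
  induction d using Nat.strong_induction_on with
  | _ d ih =>
  intro i j hij hjN hT
  have hC : ((d + 3 : ℕ) : ℤ) ≤ (Nat.fib (d + 4) : ℕ) := by exact_mod_cast add_three_le_fib d
  push_cast at hC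
  rcases hij.eq_or_lt with rfl | hlt
  · simp only [sub_self, mul_zero]
    have := Int.natCast_nonneg (∑ t ∈ innerTimes N e T i i, visitCost e t)
    omega
  obtain ⟨g, hig, hgj, hT1, hT2, hsum⟩ := exists_split hlt hjN hT
  have hf := front_cost hN hig (by omega) hT1
  have hr := rear_cost (show g + 1 ≤ j by omega) (by omega) hT2
  have hc1 : ceilDivN N g ≤ ceilDivN N (g + 1) := ceilDivN_mono (by omega)
  have hc2 : ceilDivN N (g + 1) ≤ ceilDivN N j := ceilDivN_mono (by omega)
  have hc0 : ceilDivN N i ≤ ceilDivN N g := ceilDivN_mono hig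
  match d, ih, hC with
  | 0, _, _ =>
    have h4 : Nat.fib (0 + 4) = 3 := rfl
    have := Int.natCast_nonneg (∑ t ∈ innerTimes N e T i j, visitCost e t)
    rw [h4]
    omega
  | 1, _, _ =>
    have h5 : Nat.fib (1 + 4) = 5 := rfl
    rw [h5]
    omega
  | d + 2, ih, hC =>
    have i1 := ih (d + 1) (by omega) i g hig (by omega) hT1
    have i2 := ih d (by omega) (g + 1) j hgj (by omega) hT2
    have hfib : Nat.fib (d + 2 + 4) = Nat.fib (d + 4) + Nat.fib (d + 1 + 4) := Nat.fib_add_two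
    rw [hfib]
    zify at hf hr hc0 hc1 hc2 hsum
    push_cast at *
    have p1 : 0 ≤ (d : ℤ) * (ceilDivN N (g + 1) - ceilDivN N g) :=
      mul_nonneg (by positivity) (by linarith)
    nlinarith

theorem window_cost (hN : 2 ≤ N) (d : ℕ) {i j : ℕ} (hij : i ≤ j) (hjN : j < i + N)
    (hT : track N e i T = track N e j T)
    (hvalid : ∀ q t, t < T → N ∣ track N e q t → 1 ≤ e t) :
    ((d : ℤ) + 3) * (j - i) ≤ (∑ t ∈ Finset.range T, e t : ℕ) +
      (Nat.fib (d + 4) - d - 3) + (d + 1) * (ceilDivN N j - ceilDivN N i) := by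
  have h1 := inner_cost hN d i j hij hjN hT
  have h2 := front_cost hN hij hjN hT
  have h3 := rear_cost hij hjN hT
  have hle : ∑ t ∈ innerTimes N e T i j, visitCost e t +
      (∑ t ∈ visitTimes N e T j \ visitTimes N e T i, visitCost e t +
      ∑ t ∈ visitTimes N e T i \ visitTimes N e T j, visitCost e t) ≤
      ∑ t ∈ Finset.range T, e t := by
    rw [← Finset.sum_union, ← Finset.sum_union]
    · have hmem : ∀ t ∈ innerTimes N e T i j ∪ (visitTimes N e T j \ visitTimes N e T i ∪
          visitTimes N e T i \ visitTimes N e T j), ∃ q, t ∈ visitTimes N e T q := by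
        intro t ht
        simp only [Finset.mem_union, Finset.mem_sdiff, mem_innerTimes] at ht
        rcases ht with ⟨⟨q, _, _, h⟩, _⟩ | h | h
        · exact ⟨q, h⟩
        · exact ⟨j, h.1⟩
        · exact ⟨i, h.1⟩
      refine (Finset.sum_le_sum fun t ht => ?_).trans
        (Finset.sum_le_sum_of_subset (f := e) fun t ht => ?_)
      · obtain ⟨q, hq⟩ := hmem t ht
        rw [mem_visitTimes] at hq
        have := hvalid q t hq.1 hq.2
        unfold visitCost
        split_ifs <;> omega
      · obtain ⟨q, hq⟩ := hmem t ht
        exact Finset.mem_range.2 (mem_visitTimes.1 hq).1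
    · rw [Finset.disjoint_left]
      intro t h h'
      rw [mem_innerTimes] at h
      rcases Finset.mem_union.1 h' with h' | h'
      · exact h.2.2 (Finset.mem_sdiff.1 h').1
      · exact h.2.1 (Finset.mem_sdiff.1 h').1
    · rw [Finset.disjoint_left]
      intro t h h'
      exact (Finset.mem_sdiff.1 h).2 (Finset.mem_sdiff.1 h').1
  zify at h2 h3 hle
  push_cast at *
  linarith

/-- Lower bound on the cost of merging all tokens by time `T`. -/
theorem merge_cost (hN : 2 ≤ N) (d : ℕ)
    (hvalid : ∀ q < N, ∀ t < T, N ∣ track N e q t → 1 ≤ e t)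
    (hmerge : ∀ q < N, track N e q T ≡ track N e 0 T [MOD N]) :
    ((N : ℤ) - 1) * (N - 2) + (d + 3) * (N - 1) - (Nat.fib (d + 4) - d - 3) - (d + 1) ≤
      (T : ℤ) - 1 + (∑ t ∈ Finset.range T, e t : ℕ) := by
  have hperiod : ∀ q t, N ∣ track N e q t ↔ N ∣ track N e (q % N) t := by
    intro q t
    have : ∀ c r, N ∣ track N e (r + N * c) t ↔ N ∣ track N e r t := by
      intro c r
      induction c with
      | zero => simp
      | succ c ih => rw [Nat.mul_succ, ← add_assoc, track_add_period, Nat.dvd_add_self_right, ih]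
    conv_lhs => rw [← Nat.mod_add_div q N]
    exact this _ _
  have hvalid' : ∀ q t, t < T → N ∣ track N e q t → 1 ≤ e t := fun q t ht hd =>
    hvalid (q % N) (Nat.mod_lt _ (by omega)) t ht ((hperiod q t).1 hd)
  obtain ⟨i, hi1, hiN, hi⟩ : ∃ i, 1 ≤ i ∧ i ≤ N ∧
      track N e i T = track N e (i + N - 1) T := by
    have hval : ∀ q < N, track N e q T = track N e 0 T ∨ track N e q T = track N e 0 T + N := by
      intro q hq
      have h1 : track N e 0 T ≤ track N e q T := track_mono (by omega) T
      have h2 : track N e q T ≤ track N e 0 T + N := by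
        rw [← track_add_period]; exact track_mono (by omega) T
      obtain ⟨c, hc⟩ := (Nat.modEq_iff_dvd' h1).1 (hmerge q hq).symm
      have : N * c ≤ N * 1 := by omega
      have hc1 : c ≤ 1 := Nat.le_of_mul_le_mul_left this (by omega)
      interval_cases c <;> omega
    have hex : ∃ i, 1 ≤ i ∧ track N e i T = track N e 0 T + N :=
      ⟨N, by omega, by simpa using track_add_period (N := N) (e := e) 0 T⟩
    classical
    refine ⟨Nat.find hex, (Nat.find_spec hex).1, Nat.find_min' hex
      ⟨by omega, by simpa using track_add_period (N := N) (e := e) 0 T⟩, ?_⟩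
    have hs := Nat.find_spec hex
    have hle : Nat.find hex ≤ N := Nat.find_min' hex
      ⟨by omega, by simpa using track_add_period (N := N) (e := e) 0 T⟩
    have hmin := fun h => Nat.find_min hex (m := Nat.find hex - 1) h
    generalize Nat.find hex = i at *
    rw [hs.2, show i + N - 1 = (i - 1) + N by omega, track_add_period]
    rcases hval (i - 1) (by omega) with h | h
    · rw [h]
    · rcases Nat.eq_zero_or_pos (i - 1) with h0 | h0
      · rw [h0]
      · exact absurd ⟨h0, h⟩ (hmin (by omega))
  have hw := window_cost hN d (show i ≤ i + N - 1 by omega) (by omega) hi hvalid'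
  have hceil : ceilDivN N (i + N - 1) ≤ ceilDivN N i + 1 := by
    unfold ceilDivN
    rw [← Nat.add_div_right _ (by omega)]
    exact Nat.div_le_div_right (by omega)
  have hpush : N - 1 ≤ pushCount N e T i := by
    have h1 := track_eq (N := N) (e := e) i T
    have h2 := track_eq (N := N) (e := e) (i + N - 1) T
    omega
  have hpush' : N - 2 ≤ pushCount N e T i - 1 := by omega
  have htime := pushCount_mul_le (e := e) hN i T (by omega)
  have htime' : (N - 1) * (N - 2) + 1 ≤ T :=
    le_trans (Nat.add_le_add_right (Nat.mul_le_mul_left _ hpush') 1) htime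
  obtain ⟨M, rfl⟩ : ∃ M, N = M + 2 := ⟨N - 2, by omega⟩
  rw [show i + (M + 2) - 1 = i + M + 1 by omega] at hw hceil
  zify at hceil htime'
  simp only [show M + 2 - 1 = M + 1 by omega, show M + 2 - 2 = M by omega] at htime'
  push_cast at *
  nlinarith

end LowerBound

/-! ### Upper bound -/

/-- A schedule of `L` laps that merges tokens at all the cells `0, …, L` into the cell `L`, where
in lap `l` the cells `O l` may be occupied and the tokens in `A l` move one cell forward. -/
def MergeSchedule (L C : ℕ) : Prop :=
  ∃ O A : ℕ → Finset ℕ, (∀ x ≤ L, x ∈ O 0) ∧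
    (∀ l < L, ∀ x ∈ O l, (x + if x ∈ A l then 1 else 0) ∈ O (l + 1)) ∧
    (∀ l ≤ L, ∀ x ∈ O l, l ≤ x ∧ x ≤ L) ∧
    (∀ l < L, ∀ x ∈ A l, l ≤ x ∧ x < L) ∧
    ∑ l ∈ Finset.range L, ((O l).card + (A l).card) ≤ C

theorem mergeSchedule_zero : MergeSchedule 0 0 :=
  ⟨fun _ => {0}, fun _ => ∅, by simp, by simp, by simp, by simp, by simp⟩

theorem sum_range_ite_lt (f : ℕ → ℕ) (c k s : ℕ) :
    ∑ l ∈ Finset.range (k + s), (if l < k then f l else c) =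
      ∑ l ∈ Finset.range k, f l + s * c := by
  rw [Finset.sum_range_add]
  congr 1
  · exact Finset.sum_congr rfl fun l hl => if_pos (Finset.mem_range.1 hl)
  · simp

theorem MergeSchedule.combine {k r C₁ C₂ : ℕ} (h₁ : MergeSchedule k C₁)
    (h₂ : MergeSchedule r C₂) :
    MergeSchedule (k + r + 1) (C₁ + C₂ + (k + 1) + 2 * (r + 1)) := by
  obtain ⟨O₁, A₁, start₁, step₁, occ₁, push₁, cost₁⟩ := h₁
  obtain ⟨O₂, A₂, start₂, step₂, occ₂, push₂, cost₂⟩ := h₂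
  refine ⟨fun l => (if l < k then O₁ l else {l}) ∪
      (if l < r then (O₂ l).image (· + (k + 1)) else {k + r + 1}),
    fun l => (if l < k then A₁ l else {l}) ∪
      (if l < r then (A₂ l).image (· + (k + 1)) else ∅), ?_, ?_, ?_, ?_, ?_⟩
  · intro x hx
    simp only [Finset.mem_union]
    rcases Nat.lt_or_ge k x with h | h
    · right
      split_ifs with hr
      · exact Finset.mem_image.2 ⟨x - (k + 1), start₂ _ (by omega), by omega⟩
      · rw [Finset.mem_singleton]; omega
    · left
      split_ifs with hk
      · exact start₁ x h
      · rw [Finset.mem_singleton]; omega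
  · intro l hl x hx
    simp only [Finset.mem_union] at hx ⊢
    rcases hx with hx | hx
    · left
      by_cases hk : l < k
      · simp only [hk, if_true] at hx ⊢
        have hx' := occ₁ l hk.le x hx
        have hno : x ∉ (if l < r then (A₂ l).image (· + (k + 1)) else ∅) := by
          split_ifs
          · rw [Finset.mem_image]; rintro ⟨y, _, hy⟩; omega
          · simp
        simp only [hno, or_false]
        have hs := step₁ l hk x hx
        by_cases hk' : l + 1 < k
        · simp only [hk', if_true]
          exact hs
        · have := occ₁ (l + 1) (by omega) _ hs
          simp only [hk', if_false, Finset.mem_singleton]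
          omega
      · simp only [hk, if_false, Finset.mem_singleton] at hx ⊢
        subst hx
        simp [show ¬ x + 1 < k by omega]
    · right
      by_cases hr : l < r
      · simp only [hr, if_true, Finset.mem_image] at hx ⊢
        obtain ⟨y, hy, rfl⟩ := hx
        have hy' := occ₂ l hr.le y hy
        have hno : y + (k + 1) ∉ (if l < k then A₁ l else {l}) := by
          split_ifs with h
          · exact fun h' => by have := push₁ l h _ h'; omega
          · rw [Finset.mem_singleton]; omega
        have hiff : (∃ a ∈ A₂ l, a + (k + 1) = y + (k + 1)) ↔ y ∈ A₂ l :=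
          ⟨fun ⟨a, ha, h⟩ => by rwa [show y = a by omega], fun h => ⟨y, h, rfl⟩⟩
        simp only [hno, false_or, hiff]
        have hs := step₂ l hr y hy
        by_cases hr' : l + 1 < r
        · simp only [hr', if_true, Finset.mem_image]
          exact ⟨_, hs, by omega⟩
        · have := occ₂ (l + 1) (by omega) _ hs
          simp only [hr', if_false, Finset.mem_singleton]
          omega
      · simp only [hr, if_false, Finset.mem_singleton] at hx ⊢
        subst hx
        have hno : k + r + 1 ∉ (if l < k then A₁ l else {l}) := by
          split_ifs with h
          · exact fun h' => by have := push₁ l h _ h'; omega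
          · rw [Finset.mem_singleton]; omega
        simp [hno, show ¬ l + 1 < r by omega]
  · intro l hl x hx
    rcases Finset.mem_union.1 hx with hx | hx
    · split_ifs at hx with h
      · have := occ₁ l h.le x hx; omega
      · rw [Finset.mem_singleton] at hx; omega
    · split_ifs at hx with h
      · obtain ⟨y, hy, rfl⟩ := Finset.mem_image.1 hx
        have := occ₂ l h.le y hy; omega
      · rw [Finset.mem_singleton] at hx; omega
  · intro l hl x hx
    rcases Finset.mem_union.1 hx with hx | hx
    · split_ifs at hx with h
      · have := push₁ l h x hx; omega
      · rw [Finset.mem_singleton] at hx; omega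
    · split_ifs at hx with h
      · obtain ⟨y, hy, rfl⟩ := Finset.mem_image.1 hx
        have := push₂ l h y hy; omega
      · simp at hx
  · have hle : ∀ l ∈ Finset.range (k + r + 1),
        ((if l < k then O₁ l else {l}) ∪
          (if l < r then (O₂ l).image (· + (k + 1)) else {k + r + 1})).card +
        ((if l < k then A₁ l else {l}) ∪
          (if l < r then (A₂ l).image (· + (k + 1)) else ∅)).card ≤
        (if l < k then (O₁ l).card + (A₁ l).card else 2) +
          (if l < r then (O₂ l).card + (A₂ l).card else 1) := by
      intro l _
      refine (Nat.add_le_add (Finset.card_union_le _ _) (Finset.card_union_le _ _)).trans ?_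
      have hO : ((O₂ l).image (· + (k + 1))).card ≤ (O₂ l).card := Finset.card_image_le
      have hA : ((A₂ l).image (· + (k + 1))).card ≤ (A₂ l).card := Finset.card_image_le
      split_ifs <;> (try simp only [Finset.card_singleton, Finset.card_empty]) <;> omega
    refine (Finset.sum_le_sum hle).trans ?_
    rw [Finset.sum_add_distrib, add_assoc k r 1, sum_range_ite_lt,
      show k + (r + 1) = r + (k + 1) by ring, sum_range_ite_lt]
    omega

theorem exists_mergeSchedule (m : ℕ) : ∀ K, 1 ≤ K → Nat.fib m ≤ K → K ≤ Nat.fib (m + 1) →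
    ∃ C, MergeSchedule (K - 1) C ∧ C + Nat.fib (m + 2) = (m + 1) * K := by
  induction m using Nat.strong_induction_on with
  | _ m ih =>
  intro K hK1 hlo hhi
  match m, ih with
  | 0, _ =>
    simp only [zero_add, Nat.fib_one] at hhi
    obtain rfl : K = 1 := by omega
    exact ⟨0, mergeSchedule_zero, by decide⟩
  | 1, _ =>
    have : Nat.fib (1 + 1) = 1 := rfl
    obtain rfl : K = 1 := by omega
    exact ⟨0, mergeSchedule_zero, by decide⟩
  | m + 2, ih =>
    have f2 : Nat.fib (m + 2) = Nat.fib m + Nat.fib (m + 1) := Nat.fib_add_two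
    have f3 : Nat.fib (m + 2 + 1) = Nat.fib (m + 1) + Nat.fib (m + 2) := Nat.fib_add_two
    have f4 : Nat.fib (m + 2 + 2) = Nat.fib (m + 2) + Nat.fib (m + 2 + 1) := Nat.fib_add_two
    have p1 : 0 < Nat.fib (m + 1) := Nat.fib_pos.2 (by omega)
    have hmono : Nat.fib m ≤ Nat.fib (m + 1) := Nat.fib_le_fib_succ
    have p0 : Nat.fib m = 0 → Nat.fib (m + 1) = 1 := fun h => by
      rw [Nat.fib_eq_zero.1 h]; rfl
    by_cases hK : K = 1
    · subst hK
      have hm0 : m = 0 := by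
        by_contra h
        have : 0 < Nat.fib m := Nat.fib_pos.2 (by omega)
        omega
      subst hm0
      exact ⟨0, mergeSchedule_zero, by decide⟩
    · obtain ⟨K₁, K₂, rfl, h1, h2, h3, h4, h5, h6⟩ : ∃ K₁ K₂, K = K₁ + K₂ ∧ 1 ≤ K₁ ∧ 1 ≤ K₂ ∧
          Nat.fib (m + 1) ≤ K₁ ∧ K₁ ≤ Nat.fib (m + 2) ∧ Nat.fib m ≤ K₂ ∧
          K₂ ≤ Nat.fib (m + 1) := by
        refine ⟨max (Nat.fib (m + 1)) (K - Nat.fib (m + 1)),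
          K - max (Nat.fib (m + 1)) (K - Nat.fib (m + 1)), ?_⟩
        omega
      obtain ⟨C₁, hs₁, hc₁⟩ := ih (m + 1) (by omega) K₁ h1 h3 h4
      obtain ⟨C₂, hs₂, hc₂⟩ := ih m (by omega) K₂ h2 h5 h6
      refine ⟨C₁ + C₂ + (K₁ - 1 + 1) + 2 * (K₂ - 1 + 1), ?_, ?_⟩
      · rw [show K₁ + K₂ - 1 = (K₁ - 1) + (K₂ - 1) + 1 by omega]
        exact hs₁.combine hs₂
      · rw [Nat.sub_add_cancel h1, Nat.sub_add_cancel h2]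
        have e1 : (m + 1 + 1) * K₁ + K₁ = (m + 2 + 1) * K₁ := by ring
        have e2 : (m + 1) * K₂ + 2 * K₂ = (m + 2 + 1) * K₂ := by ring
        rw [Nat.mul_add, f4]
        rw [show m + 1 + 2 = m + 2 + 1 by ring] at hc₁
        omega

/-- The block lengths realizing a schedule: after the initial `b ^ 2`, lap `l` visits the cells
`M, …, 0` of the schedule and then one free cell. -/
def scheduleBlock (M : ℕ) (O A : ℕ → Finset ℕ) : ℕ → ℕ
  | 0 => 2
  | t + 1 => if t % (M + 2) ≤ M then
      (if M - t % (M + 2) ∈ O (t / (M + 2)) then 1 else 0) +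
        (if M - t % (M + 2) ∈ A (t / (M + 2)) then 1 else 0)
    else 0

theorem scheduleBlock_lap (M : ℕ) (O A : ℕ → Finset ℕ) (l u : ℕ) (hu : u < M + 2) :
    scheduleBlock M O A ((M + 2) * l + u + 1) = if u ≤ M then
      (if M - u ∈ O l then 1 else 0) + (if M - u ∈ A l then 1 else 0) else 0 := by
  have h1 : ((M + 2) * l + u) % (M + 2) = u := by
    rw [Nat.mul_add_mod]; exact Nat.mod_eq_of_lt hu
  have h2 : ((M + 2) * l + u) / (M + 2) = l := by
    rw [Nat.mul_add_div (by omega), Nat.div_eq_of_lt hu, add_zero]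
  rw [scheduleBlock, h1, h2]

theorem sum_ite_mem_le (M : ℕ) (S : Finset ℕ) :
    ∑ u ∈ Finset.range (M + 1), (if M - u ∈ S then 1 else 0) ≤ S.card := by
  rw [← Finset.card_filter]
  refine Finset.card_le_card_of_injOn (fun u => M - u) ?_ ?_
  · intro u hu
    exact (Finset.mem_filter.1 hu).2
  · intro u hu v hv h
    have hu' := Finset.mem_range.1 (Finset.mem_filter.1 hu).1
    have hv' := Finset.mem_range.1 (Finset.mem_filter.1 hv).1
    simp only at h
    omega

theorem sum_scheduleBlock_le (M : ℕ) (O A : ℕ → Finset ℕ) (k : ℕ) :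
    ∑ t ∈ Finset.range ((M + 2) * k + 1), scheduleBlock M O A t ≤
      2 + ∑ l ∈ Finset.range k, ((O l).card + (A l).card) := by
  induction k with
  | zero => simp [scheduleBlock]
  | succ k ih =>
    rw [show (M + 2) * (k + 1) + 1 = (M + 2) * k + 1 + (M + 2) by ring, Finset.sum_range_add,
      Finset.sum_range_succ (fun l => (O l).card + (A l).card)]
    have hlap : ∑ u ∈ Finset.range (M + 2), scheduleBlock M O A ((M + 2) * k + 1 + u) ≤
        (O k).card + (A k).card := by
      have hrw : ∀ u ∈ Finset.range (M + 2), scheduleBlock M O A ((M + 2) * k + 1 + u) =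
          if u ≤ M then (if M - u ∈ O k then 1 else 0) + (if M - u ∈ A k then 1 else 0)
            else 0 := by
        intro u hu
        rw [show (M + 2) * k + 1 + u = (M + 2) * k + u + 1 by ring]
        exact scheduleBlock_lap M O A k u (Finset.mem_range.1 hu)
      rw [Finset.sum_congr rfl hrw, Finset.sum_range_succ, if_neg (by omega), add_zero,
        Finset.sum_congr rfl fun u hu => if_pos (by have := Finset.mem_range.1 hu; omega),
        Finset.sum_add_distrib]
      exact Nat.add_le_add (sum_ite_mem_le M _) (sum_ite_mem_le M _)
    omega

theorem not_dvd_of_between {N c y : ℕ} (h1 : N * c < y) (h2 : y < N * c + N) : ¬ N ∣ y := by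
  rintro ⟨b, rfl⟩
  have h3 : c < b := Nat.lt_of_mul_lt_mul_left h1
  have h4 : N * (c + 1) ≤ N * b := Nat.mul_le_mul_left N h3
  rw [Nat.mul_succ] at h4
  omega

/-- The position of a token during one lap of a schedule. -/
theorem track_lap (M : ℕ) (O A : ℕ → Finset ℕ) (q l x x' : ℕ) (hO : x ∈ O l)
    (hx' : x' = x + if x ∈ A l then 1 else 0) (hx'M : x' ≤ M)
    (h : track (M + 2) (scheduleBlock M O A) q ((M + 2) * l + 1) = (M + 2) * l + 2 + x) :
    ∀ u ≤ M + 2, track (M + 2) (scheduleBlock M O A) q ((M + 2) * l + 1 + u) =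
      (M + 2) * l + 2 + u + if u ≤ M - x then x else x' := by
  have hxM : x ≤ M := by omega
  intro u
  induction u with
  | zero => intro _; simpa using h
  | succ u ih =>
    intro hu
    have ih := ih (by omega)
    rw [← add_assoc, track, ih]
    rcases lt_trichotomy u (M - x) with hlt | heq | hgt
    · have hnd : ¬ (M + 2) ∣ (M + 2) * l + 2 + u + x := not_dvd_of_between (c := l)
        (by omega) (by omega)
      simp only [hlt.le, show u + 1 ≤ M - x by omega, if_true, hnd, false_and, if_false]
      omega
    · have hd : (M + 2) ∣ (M + 2) * l + 2 + u + x := ⟨l + 1, by rw [Nat.mul_succ]; omega⟩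
      have he := scheduleBlock_lap M O A l u (by omega)
      rw [if_pos (show u ≤ M by omega), show M - u = x by omega, if_pos hO] at he
      rw [show (M + 2) * l + 1 + u = (M + 2) * l + u + 1 by ring, he]
      simp only [show u ≤ M - x by omega, show ¬ u + 1 ≤ M - x by omega, if_true, if_false, hd,
        true_and, hx']
      split_ifs <;> omega
    · have hnd : ¬ (M + 2) ∣ (M + 2) * l + 2 + u + x' := by
        have hxx : x ≤ x' := by omega
        have hxx' : x' ≤ x + 1 := by split_ifs at hx' <;> omega
        refine not_dvd_of_between (c := l + 1) ?_ ?_ <;> rw [Nat.mul_succ] <;> omega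
      simp only [show ¬ u ≤ M - x by omega, show ¬ u + 1 ≤ M - x by omega, hnd, false_and,
        if_false]
      omega

theorem exists_careSyncWord (n : ℕ) (hn : 3 ≤ n) {C : ℕ} (h : MergeSchedule (n - 3) C) :
    ∃ w : List Bool, IsCareSyncWord (Pdelta n hn) w ∧
      w.length ≤ (n - 2) * (n - 3) + 2 + C := by
  obtain ⟨M, rfl⟩ : ∃ M, n = M + 3 := ⟨n - 3, by omega⟩
  simp only [Nat.add_sub_cancel, show M + 3 - 2 = M + 1 by omega] at *
  obtain ⟨O, A, start, step, occ, push, cost⟩ := h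
  set e := scheduleBlock M O A with he
  have hT : (M + 1) * M + 1 ≤ (M + 2) * M + 1 := by
    have : (M + 1) * M ≤ (M + 2) * M := Nat.mul_le_mul_right M (by omega)
    omega
  refine ⟨blockWord e ((M + 1) * M), ?_, ?_⟩
  swap
  · rw [length_blockWord]
    have h1 : ∑ t ∈ Finset.range ((M + 1) * M + 1), e t ≤
        ∑ t ∈ Finset.range ((M + 2) * M + 1), e t :=
      Finset.sum_le_sum_of_subset (Finset.range_mono hT)
    have h2 := sum_scheduleBlock_le M O A M
    rw [← he] at h2
    omega
  have hlap : ∀ q < M + 2, ∀ l ≤ M, ∃ x ∈ O l,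
      track (M + 2) e q ((M + 2) * l + 1) = (M + 2) * l + 2 + x := by
    intro q hq l
    induction l with
    | zero =>
      intro _
      refine ⟨q - 1, start _ (by omega), ?_⟩
      by_cases h0 : q = 0
      · simp [track, h0, he, scheduleBlock]
      · have : ¬ (M + 2) ∣ q := fun h => by have := Nat.le_of_dvd (by omega) h; omega
        simp only [mul_zero, zero_add, track, this, false_and, if_false]
        omega
    | succ l ih =>
      intro hl
      obtain ⟨x, hx, htr⟩ := ih (by omega)
      have hs := step l (by omega) x hx
      have := occ _ hl _ hs
      refine ⟨_, hs, ?_⟩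
      have := track_lap M O A q l x _ hx rfl this.2 htr (M + 2) le_rfl
      rw [show (M + 2) * (l + 1) + 1 = (M + 2) * l + 1 + (M + 2) by ring, this,
        if_neg (by omega)]
      ring
  have hvalid : ∀ q < M + 2, ∀ t < (M + 1) * M, (M + 2) ∣ track (M + 2) e q t → 1 ≤ e t := by
    intro q hq t ht hd
    rcases t with _ | t
    · simp [he, scheduleBlock]
    obtain ⟨l, u, hu, rfl⟩ : ∃ l u, u < M + 2 ∧ t = (M + 2) * l + u :=
      ⟨t / (M + 2), t % (M + 2), Nat.mod_lt _ (by omega), (Nat.div_add_mod _ _).symm⟩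
    have hlM : l < M := by
      by_contra! h
      have : (M + 2) * M ≤ (M + 2) * l := Nat.mul_le_mul_left _ h
      omega
    obtain ⟨x, hx, htr⟩ := hlap q hq l hlM.le
    have hxM := occ l hlM.le x hx
    have hx'M := occ _ hlM _ (step l hlM x hx)
    have := track_lap M O A q l x _ hx rfl hx'M.2 htr u hu.le
    rw [show (M + 2) * l + u + 1 = (M + 2) * l + 1 + u by ring, this] at hd
    have hueq : u = M - x := by
      by_contra hne
      rcases Nat.lt_or_ge u (M - x) with h | h
      · rw [if_pos h.le] at hd
        exact not_dvd_of_between (c := l) (by omega) (by omega) hd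
      · rw [if_neg (by omega)] at hd
        refine not_dvd_of_between (c := l + 1) ?_ ?_ hd <;> rw [Nat.mul_succ]
        · omega
        · split_ifs at hx'M ⊢ <;> omega
    rw [he, scheduleBlock_lap M O A l u hu, if_pos (by omega), show M - u = x by omega, if_pos hx]
    omega
  have hfinal : ∀ q < M + 2,
      stateVal (M + 2) (track (M + 2) e q ((M + 1) * M)) (e ((M + 1) * M)) = 2 := by
    intro q hq
    have hone : ∀ c, stateVal (M + 2) ((M + 2) * c + 1) (e ((M + 1) * M)) = 2 := by
      intro c
      rw [stateVal, if_neg (not_dvd_of_between (c := c) (by omega) (by omega)),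
        Nat.mul_add_mod, Nat.mod_eq_of_lt (by omega)]
    rcases M with _ | M
    · have hq' : q = 0 ∨ q = 1 := by omega
      rcases hq' with rfl | rfl
      · simp [track, stateVal, he, scheduleBlock]
      · simpa [track] using hone 0
    · obtain ⟨x, hx, htr⟩ := hlap q hq M (by omega)
      have hs := step M (by omega) x hx
      have hxM := occ M (by omega) x hx
      have hx'M := occ (M + 1) le_rfl _ hs
      have := track_lap (M + 1) O A q M x _ hx rfl hx'M.2 htr 1 (by omega)
      rw [show (M + 1 + 2) * M + 1 + 1 = (M + 1 + 1) * (M + 1) by ring] at this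
      rw [this]
      by_cases hxe : x = M
      · subst hxe
        have hA : x ∈ A x := by
          by_contra h
          rw [if_neg h] at hx'M
          omega
        have hsb := scheduleBlock_lap (x + 1) O A x 1 (by omega)
        rw [show (x + 1 + 2) * x + 1 + 1 = (x + 1 + 1) * (x + 1) by ring,
          if_pos (by omega), Nat.add_sub_cancel, if_pos hx, if_pos hA] at hsb
        rw [he, hsb, if_pos (by omega), stateVal, if_pos ⟨x + 1, by ring⟩]
        rfl
      · have hxe : x = M + 1 := by omega
        have hnA : x ∉ A M := by
          intro h
          have := push M (by omega) x h
          omega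
        rw [if_neg (by omega), if_neg hnA, hxe,
          show (M + 1 + 1) * (M + 1) + 1 + (M + 1 + 0) = (M + 1 + 2) * (M + 1) + 1 by ring]
        exact hone _
  refine ⟨⟨2, by omega⟩, ?_⟩
  have hrun : ∀ (q : Fin (M + 3)) (y : ℕ), y < M + 2 → q.val = stateVal (M + 2) y 0 →
      pfaRun (Pdelta (M + 3) hn) q (blockWord e ((M + 1) * M)) = some ⟨2, by omega⟩ := by
    intro q y hy hq
    obtain ⟨s, hs, hv⟩ := pfaRun_blockWord (M + 3) hn e q y hq ((M + 1) * M) (hvalid y hy)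
    rw [hs]
    congr 1
    exact Fin.ext (hv.trans (hfinal y hy))
  have htwo : ∀ q : Fin (M + 3), 2 ≤ q.val →
      pfaRun (Pdelta (M + 3) hn) q (blockWord e ((M + 1) * M)) = some ⟨2, by omega⟩ := by
    intro q hq
    refine hrun q (q.val - 1) (by omega) ?_
    rw [stateVal, if_neg fun h => by have := Nat.le_of_dvd (by omega) h; omega,
      Nat.mod_eq_of_lt (by omega)]
    omega
  intro q
  rcases Nat.lt_or_ge q.val 2 with hq | hq
  swap
  · exact htwo q hq
  by_cases hq0 : q.val = 0
  · exact hrun q 0 (by omega) (by simp [stateVal, hq0])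
  have hmeet : ∀ T, pfaRun (Pdelta (M + 3) hn) q (blockWord e T) =
      pfaRun (Pdelta (M + 3) hn) ⟨2, by omega⟩ (blockWord e T) := by
    intro T
    induction T with
    | zero =>
      obtain ⟨s, hs, hv⟩ := pfaRun_replicate_true (M + 3) hn q (e 0)
      obtain ⟨s', hs', hv'⟩ := pfaRun_replicate_true (M + 3) hn ⟨2, by omega⟩ (e 0)
      have he0 : e 0 = 2 := rfl
      rw [blockWord, hs, hs']
      congr 1
      apply Fin.ext
      rw [hv, hv', if_neg (by omega), if_pos le_rfl]
      simp only
      omega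
    | succ T ih => rw [blockWord, pfaRun_append, pfaRun_append, ih]
  rw [hmeet]
  exact htwo _ le_rfl

/-! ### The shortest carefully synchronizing word -/

theorem length_ge_of_isCareSyncWord (n : ℕ) (hn : 3 ≤ n) (d : ℕ) (w : List Bool)
    (hw : IsCareSyncWord (Pdelta n hn) w) :
    ((n : ℤ) - 2) * (n - 3) + (d + 3) * (n - 2) - (Nat.fib (d + 4) - d - 3) - (d + 1) ≤
      w.length := by
  obtain ⟨N, rfl⟩ : ∃ N, n = N + 1 := ⟨n - 1, by omega⟩
  obtain ⟨e, T, rfl⟩ := exists_eq_blockWord w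
  obtain ⟨s, hs⟩ := hw
  have hstart : ∀ y < N, ∃ q : Fin (N + 1), q.val = stateVal N y 0 := by
    intro y hy
    refine ⟨⟨stateVal N y 0, ?_⟩, rfl⟩
    unfold stateVal
    have := Nat.mod_lt y (show 0 < N by omega)
    split_ifs <;> omega
  have hvalid : ∀ y < N, ∀ t < T, N ∣ track N e y t → 1 ≤ e t := by
    intro y hy
    obtain ⟨q, hq⟩ := hstart y hy
    exact valid_of_pfaRun_blockWord (N + 1) hn e q y hq T s (hs q)
  have hstate : ∀ y < N, stateVal N (track N e y T) (e T) = s.val := by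
    intro y hy
    obtain ⟨q, hq⟩ := hstart y hy
    obtain ⟨s', hs', hv⟩ := pfaRun_blockWord (N + 1) hn e q y hq T (hvalid y hy)
    rw [hs q] at hs'
    rw [Option.some.inj hs']
    exact hv.symm
  have hmod : ∀ y < N, (track N e y T + if N ∣ track N e y T ∧ 2 ≤ e T then 1 else 0) % N =
      s.val - 1 := by
    intro y hy
    have h := hstate y hy
    unfold stateVal at h
    by_cases hd : N ∣ track N e y T
    · rw [if_pos hd] at h
      by_cases h2 : 2 ≤ e T
      · obtain ⟨c, hc⟩ := hd
        rw [if_pos ⟨⟨c, hc⟩, h2⟩, hc, Nat.mul_add_mod, Nat.mod_eq_of_lt (by omega)]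
        omega
      · rw [if_neg (fun h => h2 h.2), add_zero, Nat.mod_eq_zero_of_dvd hd]
        omega
    · rw [if_neg hd] at h
      rw [if_neg (fun h => hd h.1), add_zero]
      omega
  rw [length_blockWord]
  by_cases h2 : 2 ≤ e T
  · have := merge_cost (N := N) (e := e) (T := T + 1) (by omega) d
      (fun q hq t ht hd => by
        rcases Nat.lt_succ_iff_lt_or_eq.1 ht with h | rfl
        · exact hvalid q hq t h hd
        · omega)
      (fun q hq => by
        have h : (track N e q T + if N ∣ track N e q T ∧ 2 ≤ e T then 1 else 0) ≡
            (track N e 0 T + if N ∣ track N e 0 T ∧ 2 ≤ e T then 1 else 0) [MOD N] :=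
          (hmod q hq).trans (hmod 0 (by omega)).symm
        simpa only [track, add_right_comm _ 1] using h.add_right 1)
    push_cast at this ⊢
    linarith
  · have := merge_cost (N := N) (e := e) (T := T) (by omega) d hvalid
      (fun q hq => by
        have h := (hmod q hq).trans (hmod 0 (by omega)).symm
        simpa [h2, Nat.ModEq] using h)
    rw [Finset.sum_range_succ]
    push_cast at this ⊢
    linarith

theorem fib_succ_le_mul {m K : ℕ} (hK : 4 ≤ K) (h1 : Nat.fib (m - 1) < K)
    (h2 : K ≤ Nat.fib m) : Nat.fib (m + 1) ≤ (m - 3) * K := by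
  have hm : 5 ≤ m := by
    by_contra! h
    have : Nat.fib m ≤ Nat.fib 4 := Nat.fib_mono (by omega)
    have : Nat.fib 4 = 3 := rfl
    omega
  rcases hm.eq_or_lt with rfl | h
  · have : Nat.fib (5 + 1) = 8 := rfl
    omega
  · obtain ⟨k, rfl⟩ : ∃ k, m = k + 6 := ⟨m - 6, by omega⟩
    have f1 : Nat.fib (k + 6 + 1) = Nat.fib (k + 5) + Nat.fib (k + 6) := Nat.fib_add_two
    have f2 : Nat.fib (k + 6) = Nat.fib (k + 4) + Nat.fib (k + 5) := Nat.fib_add_two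
    have f3 : Nat.fib (k + 4) ≤ Nat.fib (k + 5) := Nat.fib_mono (by omega)
    have h3 : 3 * K ≤ (k + 6 - 3) * K := Nat.mul_le_mul_right K (by omega)
    simp only [show k + 6 - 1 = k + 5 by omega] at h1
    omega

/-- For `n ≥ 3`, with `m` the unique integer such that `fib(m−1) < n−2 ≤ fib(m)`,
every shortest carefully synchronizing word `w` of `P_n` has length
`n² + mn − 5n − fib(m+1) − 2m + 8`; moreover this length exceeds `(n−1)²` for `n ≥ 6`. -/
theorem Pn_shortest_sync (n m : ℕ) (hn : 3 ≤ n)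
    (hm1 : Nat.fib (m - 1) < n - 2) (hm2 : n - 2 ≤ Nat.fib m)
    (w : List Bool) (hw : IsCareSyncWord (Pdelta n hn) w)
    (hmin : ∀ v : List Bool, IsCareSyncWord (Pdelta n hn) v → w.length ≤ v.length) :
    (w.length : ℤ) =
        (n : ℤ) ^ 2 + m * n - 5 * n - Nat.fib (m + 1) - 2 * m + 8 ∧
      (6 ≤ n → (n - 1) ^ 2 < w.length) := by
  have hlength : (w.length : ℤ) =
      (n : ℤ) ^ 2 + m * n - 5 * n - Nat.fib (m + 1) - 2 * m + 8 := by
    have hm0 : m ≠ 0 := by rintro rfl; simp at hm2; omega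
    obtain ⟨k, rfl⟩ : ∃ k, m = k + 1 := ⟨m - 1, by omega⟩
    rw [Nat.add_sub_cancel] at hm1
    obtain ⟨C, hC, hCeq⟩ := exists_mergeSchedule k (n - 2) (by omega) hm1.le hm2
    rw [show n - 2 - 1 = n - 3 by omega] at hC
    obtain ⟨v, hv, hvlen⟩ := exists_careSyncWord n hn hC
    have hupper := (hmin v hv).trans hvlen
    zify [show 2 ≤ n by omega, hn] at hupper hCeq
    rcases Nat.lt_or_ge k 2 with hk | hk
    · have hfib : Nat.fib (k + 1) ≤ Nat.fib 2 := Nat.fib_mono (by omega)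
      have h2 : Nat.fib 2 = 1 := rfl
      obtain rfl : n = 3 := by omega
      obtain rfl : k = 0 := by
        by_contra h
        have : 0 < Nat.fib k := Nat.fib_pos.2 (by omega)
        omega
      have hlower := length_ge_of_isCareSyncWord 3 hn 0 w hw
      norm_num [Nat.fib] at hlower hupper hCeq ⊢
      omega
    · obtain ⟨d, rfl⟩ : ∃ d, k = d + 2 := ⟨k - 2, by omega⟩
      have hlower := length_ge_of_isCareSyncWord n hn d w hw
      rw [show d + 2 + 2 = d + 4 by ring] at hCeq
      rw [show d + 2 + 1 + 1 = d + 4 by ring]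
      push_cast at *
      apply le_antisymm <;> nlinarith
  refine ⟨hlength, fun hn6 => ?_⟩
  have hm3 : 3 ≤ m := by
    by_contra! h
    have : Nat.fib m ≤ Nat.fib 2 := Nat.fib_mono (by omega)
    have : Nat.fib 2 = 1 := rfl
    omega
  have hfib := fib_succ_le_mul (show 4 ≤ n - 2 by omega) hm1 hm2
  zify [show 2 ≤ n by omega, hm3] at hfib
  zify [show 1 ≤ n by omega]
  rw [hlength]
  nlinarith
end

section
/- There exists a sequence of transitive carefully synchronizing PFAs on three symbols with shortest carefully synchronizing word length Ω(φ^{n/3}) in the number n of states: there exist a constant c > 0 and an integer N such that for every n ≥ N there is a transitive PFA with n states and an alphabet of 3 symbols which is carefully synchronizing and whose shortest carefully synchronizing word has length at least c·φ^{n/3}, where φ = (1+√5)/2. -/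
/-- A PFA is transitive if every state can be reached from every state by some word. -/
def PFATransitive {Q σ : Type*} (δ : Q → σ → Option Q) : Prop :=
  ∀ q q' : Q, ∃ w : List σ, pfaRun δ q w = some q'

section General

variable {Q Q' σ : Type*} {δ : Q → σ → Option Q}

theorem pfaRun_append_of_eq_some {q s : Q} {u : List σ} (v : List σ)
    (h : pfaRun δ q u = some s) : pfaRun δ q (u ++ v) = pfaRun δ s v := by
  simp only [pfaRun, List.foldl_append] at *
  rw [h]

theorem pfaRun_singleton (q : Q) (a : σ) : pfaRun δ q [a] = δ q a := rfl

theorem pfaRun_concat (q : Q) (w : List σ) (a : σ) :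
    pfaRun δ q (w ++ [a]) = (pfaRun δ q w).bind fun s => δ s a := by
  simp [pfaRun, List.foldl_append, pfaStep]

/-- Some word is defined on all of `S` and maps `S` into `T`. -/
def CanSend (δ : Q → σ → Option Q) (S T : Set Q) : Prop :=
  ∃ w : List σ, ∀ q ∈ S, ∃ s ∈ T, pfaRun δ q w = some s

theorem CanSend.refl (S : Set Q) : CanSend δ S S := ⟨[], fun q hq => ⟨q, hq, rfl⟩⟩

theorem CanSend.trans {S T U : Set Q} (h₁ : CanSend δ S T) (h₂ : CanSend δ T U) :
    CanSend δ S U := by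
  obtain ⟨u, hu⟩ := h₁
  obtain ⟨v, hv⟩ := h₂
  refine ⟨u ++ v, fun q hq => ?_⟩
  obtain ⟨s, hs, hqs⟩ := hu q hq
  obtain ⟨t, ht, hst⟩ := hv s hs
  exact ⟨t, ht, (pfaRun_append_of_eq_some v hqs).trans hst⟩

/-- The PFA on `Q'` whose transitions from `q'` are read off from the image `π q'`. -/
def coverPFA (π : Q' → Q) (g : Q → σ → Option Q') (q' : Q') (a : σ) : Option Q' := g (π q') a

theorem map_pfaRun_coverPFA {π : Q' → Q} {g : Q → σ → Option Q'}
    (hg : ∀ q a, (g q a).map π = δ q a) (q' : Q') (w : List σ) :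
    (pfaRun (coverPFA π g) q' w).map π = pfaRun δ (π q') w := by
  induction w using List.reverseRecOn with
  | nil => rfl
  | append_singleton w a ih =>
    rw [pfaRun_concat, pfaRun_concat, ← ih]
    cases pfaRun (coverPFA π g) q' w with
    | none => rfl
    | some s => exact hg (π s) a

theorem PFATransitive.coverPFA {π : Q' → Q} {g : Q → σ → Option Q'}
    (hg : ∀ q a, (g q a).map π = δ q a) (hin : ∀ q', ∃ q a, g q a = some q')
    (h : PFATransitive δ) : PFATransitive (coverPFA π g) := by
  intro p' q'
  obtain ⟨q, a, hqa⟩ := hin q'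
  obtain ⟨w, hw⟩ := h (π p') q
  rw [← map_pfaRun_coverPFA hg, Option.map_eq_some_iff] at hw
  obtain ⟨s, hs, rfl⟩ := hw
  exact ⟨w ++ [a], (pfaRun_append_of_eq_some [a] hs).trans hqa⟩

theorem IsCareSyncWord.coverPFA {π : Q' → Q} {g : Q → σ → Option Q'}
    (hg : ∀ q a, (g q a).map π = δ q a) {w : List σ} (h : IsCareSyncWord δ w) {a : σ}
    (ha : ∀ q, (δ q a).isSome) : IsCareSyncWord (coverPFA π g) (w ++ [a]) := by
  obtain ⟨qs, hqs⟩ := h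
  have hsome : (g qs a).isSome := by
    have := ha qs
    rwa [← hg, Option.isSome_map] at this
  obtain ⟨s, hs⟩ := Option.isSome_iff_exists.1 hsome
  refine ⟨s, fun q' => ?_⟩
  have hw := hqs (π q')
  rw [← map_pfaRun_coverPFA hg, Option.map_eq_some_iff] at hw
  obtain ⟨t, ht, rfl⟩ := hw
  exact (pfaRun_append_of_eq_some [a] ht).trans hs

theorem IsCareSyncWord.of_coverPFA {π : Q' → Q} {g : Q → σ → Option Q'}
    (hg : ∀ q a, (g q a).map π = δ q a) (hπ : Function.Surjective π) {w : List σ}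
    (h : IsCareSyncWord (_root_.coverPFA π g) w) : IsCareSyncWord δ w := by
  obtain ⟨qs, hqs⟩ := h
  refine ⟨π qs, fun q => ?_⟩
  obtain ⟨q', rfl⟩ := hπ q
  rw [← map_pfaRun_coverPFA hg, hqs, Option.map_some]

end General

section Counter

variable {k : ℕ}

/-- The carry operation at the cells `m`, `m + 1` of a cyclic tape with symbols `0, 1, 2` (digits)
and `3` (end marker). It rewrites `2 x` to `0 (x + 1)` and `3 x` to `3 (x + 1)` for `x = 0, 1`;
an end marker in cell `m + 1` is merged into cell `m`. -/
def carryAt (m : ZMod k) (q : ZMod k × Fin 4) : Option (ZMod k × Fin 4) :=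
  if q.1 = m then ![none, none, some (m, 0), some (m, 3)] q.2
  else if q.1 = m + 1 then ![some (m + 1, 1), some (m + 1, 2), none, some (m, 0)] q.2
  else some q

/-- Reset the tape to zeros, with an end marker in cell `m`. -/
def resetAt (m : ZMod k) (q : ZMod k × Fin 4) : ZMod k × Fin 4 :=
  (q.1, if q.1 = m then 3 else 0)

/-- A binary counter on a cyclic tape with `k` cells: the letters `0`, `1`, `2` rotate the tape,
carry at cell `0`, and reset with the end marker in cell `0`. -/
def counterPFA (k : ℕ) (q : ZMod k × Fin 4) : Fin 3 → Option (ZMod k × Fin 4) :=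
  ![some (q.1 + 1, q.2), carryAt 0 q, some (resetAt 0 q)]

theorem pfaRun_counterPFA_replicate (i : ZMod k) (x : Fin 4) (m : ℕ) :
    pfaRun (counterPFA k) (i, x) (List.replicate m 0) = some (i + m, x) := by
  induction m with
  | zero => simp [pfaRun]
  | succ m ih =>
    rw [List.replicate_succ', pfaRun_concat, ih]
    simp [counterPFA, add_assoc]

theorem carryAt_sub (m i : ZMod k) (x : Fin 4) :
    carryAt 0 (i - m, x) = (carryAt m (i, x)).map fun q => (q.1 - m, q.2) := by
  unfold carryAt
  have h₁ : i - m = 0 + 1 ↔ i = m + 1 := by rw [zero_add, sub_eq_iff_eq_add, add_comm]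
  simp only [sub_eq_zero, h₁]
  split_ifs
  · fin_cases x <;> simp
  · fin_cases x <;> simp
  · simp

/-- The set of states in which cell `j` holds `f j` for `j ≤ t` and the other cells are empty. -/
def tapeSet (k t : ℕ) (f : ℕ → Fin 4) : Set (ZMod k × Fin 4) :=
  {q | ∃ j ≤ t, q = ((j : ZMod k), f j)}

/-- Cell `t` holds the end marker and the cells before it hold digits. -/
def IsCount (t : ℕ) (f : ℕ → Fin 4) : Prop := f t = 3 ∧ ∀ j < t, f j ≠ 3

/-- From `f`, the counter can reach a tape where cell `j` has been changed to `x` and no later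
cell has changed. -/
def CanSet (k t j : ℕ) (f : ℕ → Fin 4) (x : Fin 4) : Prop :=
  ∃ f', IsCount t f' ∧ f' j = x ∧ (∀ i, j < i → f' i = f i) ∧
    CanSend (counterPFA k) (tapeSet k t f) (tapeSet k t f')

theorem natCast_zmod_inj {i j : ℕ} (hi : i < k) (hj : j < k) :
    (i : ZMod k) = j ↔ i = j := by
  rw [ZMod.natCast_eq_natCast_iff', Nat.mod_eq_of_lt hi, Nat.mod_eq_of_lt hj]

theorem CanSet.two_of_add_one {t j : ℕ} (hj : j < t)
    (h : ∀ f, IsCount t f → f j ≠ 2 → CanSet k t j f (f j + 1)) {f : ℕ → Fin 4}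
    (hf : IsCount t f) : CanSet k t j f 2 := by
  have refl_two : ∀ g, IsCount t g → g j = 2 → CanSet k t j g 2 := fun g hg h₂ =>
    ⟨g, hg, h₂, fun _ _ => rfl, CanSend.refl _⟩
  have step : ∀ g x, IsCount t g → g j ≠ 2 → g j + 1 = x →
      (∀ g', IsCount t g' → g' j = x → CanSet k t j g' 2) → CanSet k t j g 2 := by
    rintro g x hg h₂ rfl hx
    obtain ⟨g₁, hc₁, he₁, hs₁, hr₁⟩ := h g hg h₂
    obtain ⟨g₂, hc₂, he₂, hs₂, hr₂⟩ := hx g₁ hc₁ he₁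
    exact ⟨g₂, hc₂, he₂, fun i hi => (hs₂ i hi).trans (hs₁ i hi), hr₁.trans hr₂⟩
  have one : ∀ g, IsCount t g → g j = 1 → CanSet k t j g 2 := fun g hg h₁ =>
    step g 2 hg (by simp [h₁]) (by simp [h₁]) refl_two
  have h3 := hf.2 j hj
  obtain h0 | h1 | h2 : f j = 0 ∨ f j = 1 ∨ f j = 2 := by
    generalize f j = x at h3
    revert x
    decide
  · exact step f 1 hf (by simp [h0]) (by simp [h0]) one
  · exact one f hf h1
  · exact refl_two f hf h2

theorem digit_add_one_ne {x : Fin 4} (h₂ : x ≠ 2) (h₃ : x ≠ 3) :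
    x + 1 ≠ 3 ∧ ∀ m : ZMod k,
      (![some (m, 1), some (m, 2), none, some (m - 1, 0)] : Fin 4 → Option (ZMod k × Fin 4)) x
        = some (m, x + 1) := by
  fin_cases x <;> simp_all

variable [NeZero k]

theorem canSend_of_carryAt (m : ZMod k) {S T : Set (ZMod k × Fin 4)}
    (h : ∀ q ∈ S, ∃ s ∈ T, carryAt m q = some s) : CanSend (counterPFA k) S T := by
  refine ⟨List.replicate (-m).val 0 ++ ([1] ++ List.replicate m.val 0), ?_⟩
  rintro ⟨i, x⟩ hq
  obtain ⟨⟨j, y⟩, hs, hqs⟩ := h _ hq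
  refine ⟨(j, y), hs, ?_⟩
  rw [pfaRun_append_of_eq_some _ (pfaRun_counterPFA_replicate i x _), ZMod.natCast_zmod_val,
    ← sub_eq_add_neg]
  have h₁ : pfaRun (counterPFA k) (i - m, x) [1] = some (j - m, y) := by
    change carryAt 0 (i - m, x) = _
    rw [carryAt_sub, hqs]
    rfl
  rw [pfaRun_append_of_eq_some _ h₁, pfaRun_counterPFA_replicate, ZMod.natCast_zmod_val,
    sub_add_cancel]

theorem canSend_of_resetAt (m : ZMod k) {S T : Set (ZMod k × Fin 4)}
    (h : ∀ q ∈ S, resetAt m q ∈ T) : CanSend (counterPFA k) S T := by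
  refine ⟨List.replicate (-m).val 0 ++ ([2] ++ List.replicate m.val 0), ?_⟩
  rintro ⟨i, x⟩ hq
  refine ⟨_, h _ hq, ?_⟩
  rw [pfaRun_append_of_eq_some _ (pfaRun_counterPFA_replicate i x _), ZMod.natCast_zmod_val,
    ← sub_eq_add_neg]
  have h₁ : pfaRun (counterPFA k) (i - m, x) [2] = some (i - m, if i = m then 3 else 0) := by
    simp [pfaRun_singleton, counterPFA, resetAt, sub_eq_zero]
  rw [pfaRun_append_of_eq_some _ h₁, pfaRun_counterPFA_replicate, ZMod.natCast_zmod_val,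
    sub_add_cancel, resetAt]

theorem canSet_zero_add_one [Fact (1 < k)] {t : ℕ} (ht : 0 < t) (htk : t < k) {f : ℕ → Fin 4}
    (hf : IsCount t f) (h2 : f 0 ≠ 2) : CanSet k t 0 f (f 0 + 1) := by
  obtain ⟨hne, hright⟩ := digit_add_one_ne (k := k) h2 (hf.2 0 ht)
  refine ⟨Function.update f 0 (f 0 + 1), ⟨?_, fun j hj => ?_⟩, by simp, fun i hi => ?_, ?_⟩
  · rw [Function.update_of_ne ht.ne', hf.1]
  · rcases eq_or_ne j 0 with rfl | h
    · simpa using hne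
    · rw [Function.update_of_ne h]
      exact hf.2 j hj
  · rw [Function.update_of_ne hi.ne']
  · refine canSend_of_carryAt (-1) ?_
    rintro _ ⟨j, hj, rfl⟩
    refine ⟨_, ⟨j, hj, rfl⟩, ?_⟩
    rcases eq_or_ne j 0 with rfl | h
    · have := hright 0
      simp only [zero_sub] at this
      simp [carryAt, this]
    · rw [Function.update_of_ne h]
      have hj0 : (j : ZMod k) ≠ 0 := by
        rw [← Nat.cast_zero, Ne, natCast_zmod_inj (by omega) (by omega)]
        exact h
      by_cases hjm : (j : ZMod k) = -1
      · have hdvd : k ∣ j + 1 := by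
          rw [← ZMod.natCast_eq_zero_iff]
          push_cast
          rw [hjm, neg_add_cancel]
        have := Nat.le_of_dvd (by omega) hdvd
        obtain rfl : j = t := by omega
        simp [carryAt, hjm, hf.1]
      · simp [carryAt, hjm, hj0]

theorem canSet_succ_add_one {t j : ℕ} (hj : j + 1 < t) (htk : t < k) {f : ℕ → Fin 4}
    (hf : IsCount t f) (h : f j = 2) (h2 : f (j + 1) ≠ 2) :
    CanSet k t (j + 1) f (f (j + 1) + 1) := by
  obtain ⟨hne, hright⟩ := digit_add_one_ne (k := k) h2 (hf.2 (j + 1) hj)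
  refine ⟨Function.update (Function.update f j 0) (j + 1) (f (j + 1) + 1),
    ⟨?_, fun i hi => ?_⟩, by simp, fun i hi => ?_, ?_⟩
  · rw [Function.update_of_ne (by omega), Function.update_of_ne (by omega), hf.1]
  · rcases eq_or_ne i (j + 1) with rfl | h₁
    · simpa using hne
    rw [Function.update_of_ne h₁]
    rcases eq_or_ne i j with rfl | h₀
    · simp
    · rw [Function.update_of_ne h₀]
      exact hf.2 i hi
  · rw [Function.update_of_ne (by omega), Function.update_of_ne (by omega)]
  · refine canSend_of_carryAt (j : ZMod k) ?_
    rintro _ ⟨i, hi, rfl⟩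
    refine ⟨_, ⟨i, hi, rfl⟩, ?_⟩
    have e₀ : (i : ZMod k) = j ↔ i = j := natCast_zmod_inj (by omega) (by omega)
    have e₁ : (i : ZMod k) = j + 1 ↔ i = j + 1 := by
      rw [← natCast_zmod_inj (k := k) (i := i) (j := j + 1) (by omega) (by omega), Nat.cast_succ]
    simp only [carryAt, e₀, e₁]
    rcases eq_or_ne i (j + 1) with rfl | h₁
    · have := hright (j + 1)
      rw [add_sub_cancel_right] at this
      simp [this]
    rcases eq_or_ne i j with rfl | h₀
    · simp [h]
    · simp [h₀, h₁]

theorem canSet_two [Fact (1 < k)] {t j : ℕ} (hj : j < t) (htk : t < k) {f : ℕ → Fin 4}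
    (hf : IsCount t f) : CanSet k t j f 2 := by
  induction j generalizing f with
  | zero => exact CanSet.two_of_add_one hj (fun f hf h2 => canSet_zero_add_one hj htk hf h2) hf
  | succ j ih =>
    refine CanSet.two_of_add_one hj (fun f hf h2 => ?_) hf
    obtain ⟨g, hc, he, hs, hr⟩ := ih (by omega) hf
    have hg := hs (j + 1) (by omega)
    obtain ⟨g', hc', he', hs', hr'⟩ := canSet_succ_add_one hj htk hc he (hg ▸ h2)
    exact ⟨g', hc', by rw [he', hg], fun i hi => (hs' i hi).trans (hs i (by omega)), hr.trans hr'⟩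

/-- The states in the cells `0, …, t`. -/
def cellSet (k t : ℕ) : Set (ZMod k × Fin 4) := {q | ∃ j ≤ t, q.1 = (j : ZMod k)}

theorem canSend_cellSet_succ [Fact (1 < k)] {t : ℕ} (htk : t + 1 < k) :
    CanSend (counterPFA k) (cellSet k (t + 1)) (cellSet k t) := by
  have hc : IsCount (t + 1) fun j => if j = t + 1 then 3 else 0 :=
    ⟨by simp, fun j hj => by simp [hj.ne]⟩
  obtain ⟨f, hf, he, -, hr⟩ := canSet_two (k := k) (Nat.lt_succ_self t) htk hc
  refine CanSend.trans ?_ (hr.trans ?_)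
  · refine canSend_of_resetAt ((t + 1 : ℕ) : ZMod k) ?_
    rintro ⟨i, x⟩ ⟨j, hj, rfl : i = j⟩
    refine ⟨j, hj, ?_⟩
    simp only [resetAt, natCast_zmod_inj (show j < k by omega) htk]
  · refine canSend_of_carryAt (t : ZMod k) ?_
    rintro _ ⟨i, hi, rfl⟩
    have e₀ : (i : ZMod k) = t ↔ i = t := natCast_zmod_inj (by omega) (by omega)
    have e₁ : (i : ZMod k) = t + 1 ↔ i = t + 1 := by
      rw [← natCast_zmod_inj (k := k) (i := i) (j := t + 1) (by omega) (by omega), Nat.cast_succ]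
    simp only [carryAt, e₀, e₁]
    rcases eq_or_ne i (t + 1) with rfl | h₁
    · exact ⟨(t, 0), ⟨t, le_rfl, rfl⟩, by simp [hf.1]⟩
    rcases eq_or_ne i t with rfl | h₀
    · exact ⟨(i, 0), ⟨i, le_rfl, rfl⟩, by simp [he]⟩
    · exact ⟨(i, f i), ⟨i, by omega, rfl⟩, by simp [h₀, h₁]⟩

theorem exists_isCareSyncWord_counterPFA [Fact (1 < k)] :
    ∃ w, IsCareSyncWord (counterPFA k) w := by
  have hall : ∀ t < k, CanSend (counterPFA k) (cellSet k t) {((0 : ZMod k), (3 : Fin 4))} := by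
    intro t
    induction t with
    | zero =>
      refine fun _ => canSend_of_resetAt 0 ?_
      rintro ⟨i, x⟩ ⟨j, hj, rfl : i = j⟩
      obtain rfl : j = 0 := by omega
      simp [resetAt]
    | succ t ih => exact fun h => (canSend_cellSet_succ h).trans (ih (by omega))
  have hk : 0 < k := Nat.pos_of_neZero k
  obtain ⟨w, hw⟩ := hall (k - 1) (by omega)
  refine ⟨w, (0, 3), fun q => ?_⟩
  obtain ⟨s, rfl, hs⟩ := hw q ⟨q.1.val, by have := q.1.val_lt; omega, by simp⟩
  exact hs

theorem transitive_counterPFA [Fact (1 < k)] : PFATransitive (counterPFA k) := by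
  let R (p q : ZMod k × Fin 4) : Prop := ∃ w, pfaRun (counterPFA k) p w = some q
  have trans {p q s} (h₁ : R p q) (h₂ : R q s) : R p s := by
    obtain ⟨u, hu⟩ := h₁
    obtain ⟨v, hv⟩ := h₂
    exact ⟨u ++ v, (pfaRun_append_of_eq_some v hu).trans hv⟩
  have rot (i j : ZMod k) (x : Fin 4) : R (i, x) (j, x) :=
    ⟨List.replicate (j - i).val 0, by
      rw [pfaRun_counterPFA_replicate, ZMod.natCast_zmod_val, add_sub_cancel]⟩
  have letter {p q} (a : Fin 3) (h : counterPFA k p a = some q) : R p q := ⟨[a], h⟩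
  have to_marker (i : ZMod k) (x : Fin 4) : R (i, x) (0, 3) :=
    trans (rot i 0 x) (letter 2 (by simp [counterPFA, resetAt]))
  have to_zero : R (0, 3) (1, 0) :=
    trans (rot 0 1 3) (letter 2 (by simp [counterPFA, resetAt]))
  have to_one : R (0, 3) (1, 1) := trans to_zero (letter 1 (by simp [counterPFA, carryAt]))
  have to_two : R (0, 3) (1, 2) := trans to_one (letter 1 (by simp [counterPFA, carryAt]))
  rintro ⟨i, x⟩ ⟨j, y⟩
  refine trans (to_marker i x) ?_
  fin_cases y
  · exact trans to_zero (rot 1 j 0)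
  · exact trans to_one (rot 1 j 1)
  · exact trans to_two (rot 1 j 2)
  · exact rot 0 j 3

/-- The numerical value of a symbol. -/
def digitVal : Fin 4 → ℕ := ![0, 1, 2, 0]

/-- The number written on the tape `f` when the end marker is in cell `p`. -/
def tapeVal (f : ZMod k → Fin 4) (p : ZMod k) : ℕ := ∑ i, digitVal (f i) * 2 ^ (i - p).val

theorem tapeVal_rotate (f : ZMod k → Fin 4) (p : ZMod k) :
    tapeVal (fun i => f (i - 1)) (p + 1) = tapeVal f p := by
  unfold tapeVal
  rw [← Equiv.sum_comp (Equiv.addRight (1 : ZMod k))]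
  simp

theorem tapeVal_update (f : ZMod k → Fin 4) (p i : ZMod k) (x : Fin 4) :
    tapeVal (Function.update f i x) p + digitVal (f i) * 2 ^ (i - p).val =
      tapeVal f p + digitVal x * 2 ^ (i - p).val := by
  unfold tapeVal
  rw [← Finset.add_sum_erase _ _ (Finset.mem_univ i),
    ← Finset.add_sum_erase _ (fun j => digitVal (f j) * 2 ^ (j - p).val) (Finset.mem_univ i)]
  have : ∑ j ∈ Finset.univ.erase i, digitVal (Function.update f i x j) * 2 ^ (j - p).val =
      ∑ j ∈ Finset.univ.erase i, digitVal (f j) * 2 ^ (j - p).val :=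
    Finset.sum_congr rfl fun j hj => by rw [Function.update_of_ne (Finset.ne_of_mem_erase hj)]
  rw [this, Function.update_self]
  ring

/-- On a tape of value less than `2 ^ k` a carry cannot overflow: if it is defined, it produces a
new tape whose value is larger by at most `2`. -/
theorem carryAt_tape [Fact (1 < k)] {f : ZMod k → Fin 4} {p : ZMod k}
    (hp : ∀ i, f i = 3 ↔ i = p) (hlt : tapeVal f p < 2 ^ k)
    (hdef : ∀ i, (carryAt 0 (i, f i)).isSome) :
    ∃ f' : ZMod k → Fin 4, (∀ i, f' i = 3 ↔ i = p) ∧ tapeVal f' p ≤ tapeVal f p + 2 ∧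
      ∀ i, carryAt 0 (i, f i) = some (i, f' i) := by
  have hk : 1 < k := Fact.out
  have h0 : f 0 = 2 ∨ f 0 = 3 := by
    have := hdef 0
    simp only [carryAt] at this
    generalize f 0 = x at this
    fin_cases x <;> simp_all
  have h1 : f 1 = 0 ∨ f 1 = 1 ∨ f 1 = 3 := by
    have := hdef 1
    simp only [carryAt] at this
    generalize f 1 = x at this
    fin_cases x <;> simp_all
  have hp1 : p ≠ 1 := by
    rintro rfl
    have h02 : f 0 = 2 := h0.resolve_right fun h => zero_ne_one ((hp 0).1 h)
    have hle : digitVal (f 0) * 2 ^ ((0 : ZMod k) - 1).val ≤ tapeVal f 1 :=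
      Finset.single_le_sum (f := fun i : ZMod k => digitVal (f i) * 2 ^ (i - 1).val)
        (fun _ _ => Nat.zero_le _) (Finset.mem_univ 0)
    obtain ⟨k, rfl⟩ : ∃ l, k = l + 1 := ⟨k - 1, by omega⟩
    rw [h02, zero_sub, ZMod.val_neg_one] at hle
    simp only [digitVal, pow_succ] at hle hlt
    simp at hle
    omega
  have h13 : f 1 ≠ 3 := fun h => hp1 ((hp 1).1 h).symm
  have h12 : f 1 ≠ 2 := by rcases h1 with h | h | h <;> simp [h]
  obtain ⟨hne, hright⟩ := digit_add_one_ne (k := k) h12 h13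
  have hdig : digitVal (f 1 + 1) = digitVal (f 1) + 1 := by
    rcases h1 with h | h | h
    · simp [h, digitVal]
    · simp [h, digitVal]
    · exact absurd h h13
  have hr := hright 1
  rw [sub_self] at hr
  rcases h0 with h0 | h0
  · have hp0 : p ≠ 0 := fun h => by have := (hp 0).2 h.symm; simp [h0] at this
    refine ⟨Function.update (Function.update f 0 0) 1 (f 1 + 1), fun i => ?_, ?_, fun i => ?_⟩
    · rcases eq_or_ne i 1 with rfl | h₁
      · simpa [hp1.symm] using hne
      rw [Function.update_of_ne h₁]
      rcases eq_or_ne i 0 with rfl | h₀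
      · simpa using hp0.symm
      · rw [Function.update_of_ne h₀, hp]
    · have e₁ := tapeVal_update (Function.update f 0 0) p 1 (f 1 + 1)
      have e₀ := tapeVal_update f p 0 0
      have hval : (1 - p : ZMod k).val ≤ (0 - p : ZMod k).val + 1 := by
        have := ZMod.val_add_le (0 - p : ZMod k) 1
        rwa [ZMod.val_one, zero_sub, neg_add_eq_sub, ← zero_sub] at this
      have hpow := Nat.pow_le_pow_right two_pos hval
      rw [pow_succ] at hpow
      rw [Function.update_of_ne one_ne_zero, hdig] at e₁
      rw [h0] at e₀
      simp only [digitVal, Matrix.cons_val] at e₀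
      simp only [add_mul] at e₁
      omega
    · rcases eq_or_ne i 1 with rfl | h₁
      · simp [carryAt, hr]
      rcases eq_or_ne i 0 with rfl | h₀
      · simp [carryAt, h0]
      · simp [carryAt, h₀, h₁]
  · obtain rfl : (0 : ZMod k) = p := (hp 0).1 h0
    refine ⟨Function.update f 1 (f 1 + 1), fun i => ?_, ?_, fun i => ?_⟩
    · rcases eq_or_ne i 1 with rfl | h₁
      · simpa using hne
      · rw [Function.update_of_ne h₁, hp]
    · have e₁ := tapeVal_update f 0 1 (f 1 + 1)
      rw [hdig, sub_zero, ZMod.val_one] at e₁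
      simp only [add_mul] at e₁
      omega
    · rcases eq_or_ne i 1 with rfl | h₁
      · simp [carryAt, hr]
      rcases eq_or_ne i 0 with rfl | h₀
      · simp [carryAt, h0]
      · simp [carryAt, h₀, h₁]

/-- After a short word that is defined everywhere, all states are still occupied, or the states
of some tape with a small value are. -/
theorem counterPFA_occupied [Fact (1 < k)] (w : List (Fin 3))
    (hdef : ∀ q, (pfaRun (counterPFA k) q w).isSome) (hlen : 2 * w.length < 2 ^ k) :
    (∀ s, ∃ q, pfaRun (counterPFA k) q w = some s) ∨
      ∃ (f : ZMod k → Fin 4) (p : ZMod k), (∀ i, f i = 3 ↔ i = p) ∧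
        tapeVal f p ≤ 2 * w.length ∧ ∀ i, ∃ q, pfaRun (counterPFA k) q w = some (i, f i) := by
  induction w using List.reverseRecOn with
  | nil => exact Or.inl fun s => ⟨s, rfl⟩
  | append_singleton w a ih =>
    rw [List.length_append, List.length_singleton] at hlen
    have hstep {q s} (h : pfaRun (counterPFA k) q w = some s) :
        pfaRun (counterPFA k) q (w ++ [a]) = counterPFA k s a := by
      rw [pfaRun_concat, h, Option.bind_some]
    have hdef' {q s} (h : pfaRun (counterPFA k) q w = some s) : (counterPFA k s a).isSome := by
      rw [← hstep h]
      exact hdef q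
    have hprev : ∀ q, (pfaRun (counterPFA k) q w).isSome := fun q => by
      have := hdef q
      rw [pfaRun_concat] at this
      exact Option.isSome_of_isSome_bind this
    have hocc := ih hprev (by omega)
    have hreset (h : ∀ i, ∃ q x, pfaRun (counterPFA k) q w = some (i, x)) (ha : a = 2) :
        ∃ (f : ZMod k → Fin 4) (p : ZMod k), (∀ i, f i = 3 ↔ i = p) ∧
        tapeVal f p ≤ 2 * (w ++ [a]).length ∧
        ∀ i, ∃ q, pfaRun (counterPFA k) q (w ++ [a]) = some (i, f i) := by
      refine ⟨fun i => if i = 0 then 3 else 0, 0, fun i => ?_, ?_, fun i => ?_⟩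
      · by_cases hi : i = 0 <;> simp [hi]
      · refine le_of_eq_of_le (Finset.sum_eq_zero fun i _ => ?_) (Nat.zero_le _)
        by_cases hi : i = 0 <;> simp [hi, digitVal]
      · obtain ⟨q, x, hq⟩ := h i
        refine ⟨q, (hstep hq).trans ?_⟩
        simp [ha, counterPFA, resetAt]
    rcases hocc with hocc | ⟨f, p, hp, hval, hocc⟩
    · obtain rfl | rfl | rfl : a = 0 ∨ a = 1 ∨ a = 2 := by clear * -; revert a; decide
      · refine Or.inl fun s => ?_
        obtain ⟨q, hq⟩ := hocc (s.1 - 1, s.2)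
        exact ⟨q, (hstep hq).trans (by simp [counterPFA])⟩
      · obtain ⟨q, hq⟩ := hocc (0, 0)
        simpa [counterPFA, carryAt] using hdef' hq
      · exact Or.inr (hreset (fun i => (hocc (i, 0)).imp fun q hq => ⟨0, hq⟩) rfl)
    · right
      obtain rfl | rfl | rfl : a = 0 ∨ a = 1 ∨ a = 2 := by clear * -; revert a; decide
      · refine ⟨fun i => f (i - 1), p + 1, fun i => by rw [hp, sub_eq_iff_eq_add], ?_, fun i => ?_⟩
        · rw [tapeVal_rotate, List.length_append]
          omega
        · obtain ⟨q, hq⟩ := hocc (i - 1)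
          exact ⟨q, (hstep hq).trans (by simp [counterPFA])⟩
      · obtain ⟨f', hp', hval', hf'⟩ := carryAt_tape hp (by omega) fun i =>
          (hocc i).elim fun q hq => hdef' hq
        refine ⟨f', p, hp', ?_, fun i => ?_⟩
        · rw [List.length_append, List.length_singleton]
          omega
        · obtain ⟨q, hq⟩ := hocc i
          exact ⟨q, (hstep hq).trans (hf' i)⟩
      · exact hreset (fun i => (hocc i).imp fun q hq => ⟨f i, hq⟩) rfl

theorem two_pow_le_of_isCareSyncWord_counterPFA [Fact (1 < k)] {w : List (Fin 3)}
    (h : IsCareSyncWord (counterPFA k) w) : 2 ^ k ≤ 2 * w.length := by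
  obtain ⟨qs, hqs⟩ := h
  by_contra! hlt
  have hcell : ∀ i : ZMod k, i = qs.1 := fun i => by
    rcases counterPFA_occupied w (fun q => by simp [hqs]) hlt with hocc | ⟨f, p, -, -, hocc⟩
    · obtain ⟨q, hq⟩ := hocc (i, 0)
      rw [hqs, Option.some_inj] at hq
      rw [hq]
    · obtain ⟨q, hq⟩ := hocc i
      rw [hqs, Option.some_inj] at hq
      rw [hq]
  exact zero_ne_one ((hcell 0).trans (hcell 1).symm)

end Counter

section Padding

variable {k s : ℕ}

/-- The projection that treats the `s` extra states as copies of the state `(0, 3)`. -/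
def padProj : (ZMod k × Fin 4) ⊕ Fin s → ZMod k × Fin 4 := Sum.elim id fun _ => (0, 3)

/-- The transitions of the counter, where resetting cell `0` from the symbol `x` leads to the
`x`-th copy of `(0, 3)` if there is one. -/
def padLift (k s : ℕ) (q : ZMod k × Fin 4) (a : Fin 3) : Option ((ZMod k × Fin 4) ⊕ Fin s) :=
  if h : a = 2 ∧ q.1 = 0 ∧ q.2.val < s then some (Sum.inr ⟨q.2.val, h.2.2⟩)
  else (counterPFA k q a).map Sum.inl

theorem map_padProj_padLift (q : ZMod k × Fin 4) (a : Fin 3) :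
    (padLift k s q a).map padProj = counterPFA k q a := by
  unfold padLift
  split_ifs with h
  · simp [h.1, padProj, counterPFA, resetAt, h.2.1]
  · simp [Option.map_map, padProj]

theorem exists_padLift_eq_some (hs : s < 4) (q' : (ZMod k × Fin 4) ⊕ Fin s) :
    ∃ q a, padLift k s q a = some q' := by
  rcases q' with ⟨i, x⟩ | x
  · exact ⟨(i - 1, x), 0, by simp [padLift, counterPFA]⟩
  · exact ⟨(0, ⟨x, by omega⟩), 2, by simp [padLift]⟩

theorem exists_pfa_of_eq [Fact (1 < k)] (hs : s < 4) {n : ℕ} (hn : n = 4 * k + s) :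
    ∃ δ : Fin n → Fin 3 → Option (Fin n),
      PFATransitive δ ∧ (∃ w : List (Fin 3), IsCareSyncWord δ w) ∧
      ∀ w : List (Fin 3), IsCareSyncWord δ w → 2 ^ k ≤ 2 * w.length := by
  have hk : 1 < k := Fact.out
  have : NeZero k := ⟨by omega⟩
  have e : (ZMod k × Fin 4) ⊕ Fin s ≃ Fin n := Fintype.equivFinOfCardEq (by
    simp [ZMod.card, hn, mul_comm])
  let π : Fin n → ZMod k × Fin 4 := padProj ∘ e.symm
  let g (q : ZMod k × Fin 4) (a : Fin 3) : Option (Fin n) := (padLift k s q a).map e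
  have hg (q a) : (g q a).map π = counterPFA k q a := by
    rw [← map_padProj_padLift (s := s), Option.map_map]
    congr 1
    ext x : 1
    simp [π]
  have hin (q') : ∃ q a, g q a = some q' := by
    obtain ⟨q, a, h⟩ := exists_padLift_eq_some hs (e.symm q')
    exact ⟨q, a, by simp [g, h]⟩
  have hπ : Function.Surjective π := fun q => ⟨e (Sum.inl q), by simp [π, padProj]⟩
  obtain ⟨w, hw⟩ := exists_isCareSyncWord_counterPFA (k := k)
  exact ⟨coverPFA π g, transitive_counterPFA.coverPFA hg hin,
    ⟨_, hw.coverPFA hg (a := 0) fun q => rfl⟩,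
    fun w hw => two_pow_le_of_isCareSyncWord_counterPFA (hw.of_coverPFA hg hπ)⟩

end Padding

theorem golden_rpow_le {n k : ℕ} (h : n ≤ 4 * k + 3) :
    ((1 + Real.sqrt 5) / 2) ^ ((n : ℝ) / 3) ≤ 2 * (2 : ℝ) ^ k := by
  have h5 : Real.sqrt 5 ^ 2 = 5 := Real.sq_sqrt (by norm_num)
  have h5' : Real.sqrt 5 ≤ 3 := by rw [Real.sqrt_le_left (by norm_num)]; norm_num
  have hφ : 0 ≤ (1 + Real.sqrt 5) / 2 := by positivity
  have h4 : ((1 + Real.sqrt 5) / 2) ^ (4 : ℝ) ≤ 2 ^ (3 : ℝ) := by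
    norm_cast
    nlinarith
  calc ((1 + Real.sqrt 5) / 2) ^ ((n : ℝ) / 3)
      = (((1 + Real.sqrt 5) / 2) ^ (4 : ℝ)) ^ ((n : ℝ) / 12) := by
        rw [← Real.rpow_mul hφ]
        ring_nf
    _ ≤ ((2 : ℝ) ^ (3 : ℝ)) ^ ((n : ℝ) / 12) := by gcongr
    _ = (2 : ℝ) ^ ((n : ℝ) / 4) := by
        rw [← Real.rpow_mul (by norm_num)]
        ring_nf
    _ ≤ (2 : ℝ) ^ ((k + 1 : ℕ) : ℝ) := by
        refine Real.rpow_le_rpow_of_exponent_le (by norm_num) ?_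
        have : (n : ℝ) ≤ 4 * k + 3 := by exact_mod_cast h
        push_cast
        linarith
    _ = 2 * (2 : ℝ) ^ k := by rw [Real.rpow_natCast, pow_succ, mul_comm]

/-- There is a sequence of transitive carefully synchronizing PFAs on three symbols with
`n` states and shortest carefully synchronizing word length `Ω(φ^{n/3})`,
where `φ = (1+√5)/2` is the golden ratio. -/
theorem exists_ternary_transitive_pfa_golden : ∃ c : ℝ, 0 < c ∧ ∃ N : ℕ, ∀ n : ℕ, N ≤ n →
    ∃ δ : Fin n → Fin 3 → Option (Fin n),
      PFATransitive δ ∧ (∃ w : List (Fin 3), IsCareSyncWord δ w) ∧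
      ∀ w : List (Fin 3), IsCareSyncWord δ w →
        c * ((1 + Real.sqrt 5) / 2) ^ ((n : ℝ) / 3) ≤ (w.length : ℝ) := by
  refine ⟨1 / 4, by norm_num, 8, fun n hn => ?_⟩
  have : Fact (1 < n / 4) := ⟨by omega⟩
  obtain ⟨δ, htrans, hsync, hlen⟩ := exists_pfa_of_eq (k := n / 4) (s := n % 4)
    (Nat.mod_lt _ (by norm_num)) (Nat.div_add_mod n 4).symm
  refine ⟨δ, htrans, hsync, fun w hw => ?_⟩
  have h₁ := golden_rpow_le (n := n) (k := n / 4) (by omega)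
  have h₂ : (2 : ℝ) ^ (n / 4) ≤ 2 * w.length := by exact_mod_cast hlen w hw
  linarith
end
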